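/- arXiv:2105.01449 — 2 statements merged into one kernel-verified Lean document; each statement's English description precedes it below -/
import Mathlib

section
/- The Lagrange spectrum is contained in the Markov spectrum, L ⊆ M, and both L and M are closed subsets of ℝ. -/
open scoped ENNReal

/-- The distance from a real number to the nearest integer. -/
noncomputable def distNearestInt (x : ℝ) : ℝ := |x - round x|

/-- The best constant of Diophantine approximation of `α`,
`ℓ(α) = limsup_{q → ∞} 1 / (q ⬝ ‖q α‖) ∈ [0, ∞]`. -/
noncomputable def lagrangeVal (α : ℝ) : ℝ≥0∞ :=
  Filter.limsup (fun q : ℕ => ENNReal.ofReal (1 / (q * distNearestInt (q * α)))) Filter.atTop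

/-- The Lagrange spectrum: the set of finite values `ℓ(α)` over irrational `α`. -/
def LagrangeSpectrum : Set ℝ :=
  {t | ∃ α : ℝ, Irrational α ∧ lagrangeVal α ≠ ⊤ ∧ (lagrangeVal α).toReal = t}

/-- The best constant of Diophantine approximation of the binary quadratic form
`h(x,y) = a x² + b x y + c y²`, namely `m(h) = sup_{(p,q) ≠ (0,0)} √Δ(h) / |h(p,q)| ∈ (0, ∞]`. -/
noncomputable def markovVal (a b c : ℝ) : ℝ≥0∞ :=
  ⨆ (pq : ℤ × ℤ) (_ : pq ≠ (0, 0)),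
    ENNReal.ofReal (Real.sqrt (b ^ 2 - 4 * a * c)) /
      ENNReal.ofReal |a * (pq.1 : ℝ) ^ 2 + b * pq.1 * pq.2 + c * (pq.2 : ℝ) ^ 2|

/-- The Markov spectrum: the set of finite values `m(h)` over real indefinite binary
quadratic forms `h` with positive discriminant. -/
def MarkovSpectrum : Set ℝ :=
  {t | ∃ a b c : ℝ, 0 < b ^ 2 - 4 * a * c ∧ markovVal a b c ≠ ⊤ ∧ (markovVal a b c).toReal = t}

/-!
For an integer vector `w`, the product `q * ‖q * α‖` is the value at `w` of the form with roots `α`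
and `∞`, and the values of forms at integer vectors do not change when `SL(2, ℤ)` moves form and
vector together. Moving an integer vector with a small value to `(1, 0)` turns the smallness into a
large distance between the two roots, and a translation brings one of them into `[0, 1]`. By
compactness, the roots `α` and `∞` therefore return, under matrices contracting the direction of
`α` arbitrarily strongly, ever more closely to a pair of slopes `(ξ, η)` with `|ξ - η| = ℓ(α)`. The
bounds for `α` pass to the limit: the form with roots `ξ` and `η` has all its values at nonzero
integer vectors at least `1`, so it has Markov value `|ξ - η|`. Compactness of the normalised roots
also shows that `M` is closed.

For `L`, let `ℓ(αₙ)` tend to `t`, with `(ξₙ, ηₙ)` tending to `(ξ, η)`. A strong return of `αₙ`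
composed with the inverse of an earlier one is a hyperbolic matrix with axes near `ξ` and `η`.
Multiply such matrices with errors tending to `0`: the product has a contracted direction `α` and
returns to `(ξ, η)` with any accuracy, whence `ℓ(α) ≥ t`. Conversely an integer vector leaves the
cone around `ξ` at some factor of the product, and there the value of the form of `α` is nearly
that of the form of some `αₙ`, whence `ℓ(α) ≤ t`.
-/

namespace MarkovLagrange

open Filter Topology Set
open scoped MatrixGroups

section Plane

/-- The area form of the plane. With it, a binary quadratic form with roots in the directions of
`a` and `e` is a multiple of `v ↦ wedge a v * wedge e v`. -/
def wedge (v w : Fin 2 → ℝ) : ℝ := v 0 * w 1 - v 1 * w 0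

/-- The vector in the direction of slope `z`, where slopes are measured as `x / y`. -/
def direction (z : ℝ) : Fin 2 → ℝ := ![z, 1]

/-- The vector `(1, 0)`, in the direction of slope `∞`. -/
def horizontal : Fin 2 → ℝ := ![1, 0]

/-- The absolute value of the quadratic form with roots in the directions of `a` and `e`, scaled to
have discriminant `wedge a e ^ 2`. -/
def absForm (a e v : Fin 2 → ℝ) : ℝ := |wedge a v| * |wedge e v|

/-- The double cone of aperture `σ` around the direction of slope `z`. -/
def cone (z σ : ℝ) : Set (Fin 2 → ℝ) := {v | |wedge (direction z) v| ≤ σ * |v 1|}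

/-- The vectors with integer coordinates. -/
def integerLattice : Set (Fin 2 → ℝ) := range fun (n : Fin 2 → ℤ) i ↦ (n i : ℝ)

theorem wedge_direction (z : ℝ) (v : Fin 2 → ℝ) : wedge (direction z) v = z * v 1 - v 0 := by
  simp [wedge, direction]

theorem wedge_horizontal (v : Fin 2 → ℝ) : wedge horizontal v = v 1 := by
  simp [wedge, horizontal]

theorem abs_wedge_direction_horizontal (z : ℝ) : |wedge (direction z) horizontal| = 1 := by
  simp [wedge, direction, horizontal]

theorem absForm_nonneg (a e v : Fin 2 → ℝ) : 0 ≤ absForm a e v :=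
  mul_nonneg (abs_nonneg _) (abs_nonneg _)

theorem wedge_smul (v w : Fin 2 → ℝ) (c : ℝ) : wedge v (c • w) = c * wedge v w := by
  simp only [wedge, Pi.smul_apply, smul_eq_mul]
  ring

theorem abs_wedge_comm (v w : Fin 2 → ℝ) : |wedge v w| = |wedge w v| := by
  rw [← abs_neg]
  congr 1
  simp only [wedge]
  ring

theorem wedge_eq_sub (z : ℝ) (v w : Fin 2 → ℝ) :
    wedge v w = v 1 * wedge (direction z) w - w 1 * wedge (direction z) v := by
  rw [wedge_direction, wedge_direction, wedge]
  ring

/-- Integral changes of coordinates of the plane, as the action of `SL(2, ℤ)` by matrix-vector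
products. -/
noncomputable instance integralAction : DistribMulAction SL(2, ℤ) (Fin 2 → ℝ) :=
  DistribMulAction.compHom _ (Matrix.SpecialLinearGroup.map (n := Fin 2) (Int.castRingHom ℝ))

theorem smul_apply (M : SL(2, ℤ)) (v : Fin 2 → ℝ) (i : Fin 2) :
    (M • v) i = M i 0 * v 0 + M i 1 * v 1 := by
  change (((M : SL(2, ℝ)) : Matrix (Fin 2) (Fin 2) ℝ).mulVec v) i = _
  simp [Matrix.mulVec, dotProduct, Fin.sum_univ_two]

instance : SMulCommClass SL(2, ℤ) ℝ (Fin 2 → ℝ) where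
  smul_comm M c v := by
    ext i
    simp only [smul_apply, Pi.smul_apply, smul_eq_mul]
    ring

@[simp]
theorem wedge_smul_smul (M : SL(2, ℤ)) (v w : Fin 2 → ℝ) : wedge (M • v) (M • w) = wedge v w := by
  have hdet : (M 0 0 * M 1 1 - M 0 1 * M 1 0 : ℝ) = 1 := by
    exact_mod_cast (Matrix.det_fin_two M.1).symm.trans M.2
  simp only [wedge, smul_apply]
  linear_combination (v 0 * w 1 - v 1 * w 0) * hdet

@[simp]
theorem absForm_smul_smul (M : SL(2, ℤ)) (a e v : Fin 2 → ℝ) :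
    absForm (M • a) (M • e) (M • v) = absForm a e v := by
  simp only [absForm, wedge_smul_smul]

theorem wedge_inv_smul (M : SL(2, ℤ)) (v w : Fin 2 → ℝ) : wedge v (M⁻¹ • w) = wedge (M • v) w := by
  rw [← wedge_smul_smul M, smul_inv_smul]

theorem absForm_inv_smul (M : SL(2, ℤ)) (a e v : Fin 2 → ℝ) :
    absForm a e (M⁻¹ • v) = absForm (M • a) (M • e) v := by
  simp only [absForm, wedge_inv_smul]

theorem continuous_smul (M : SL(2, ℤ)) : Continuous fun v : Fin 2 → ℝ ↦ M • v := by
  refine continuous_pi fun i ↦ ?_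
  simp only [smul_apply]
  fun_prop

theorem smul_mem_integerLattice (M : SL(2, ℤ)) {w : Fin 2 → ℝ} (hw : w ∈ integerLattice) :
    M • w ∈ integerLattice := by
  obtain ⟨n, rfl⟩ := hw
  refine ⟨fun i ↦ M i 0 * n 0 + M i 1 * n 1, funext fun i ↦ ?_⟩
  simp [smul_apply]

theorem horizontal_mem_integerLattice : horizontal ∈ integerLattice :=
  ⟨![1, 0], by ext i; fin_cases i <;> simp [horizontal]⟩

theorem horizontal_ne_zero : horizontal ≠ 0 := fun h ↦ by
  simpa [horizontal] using congrFun h 0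

end Plane

section Cones

variable {z z' ξ η σ τ : ℝ} {a e v w u u' : Fin 2 → ℝ}

theorem mem_cone : v ∈ cone z σ ↔ |wedge (direction z) v| ≤ σ * |v 1| := Iff.rfl

theorem cone_subset_cone (h : σ ≤ τ) : cone z σ ⊆ cone z τ := fun _ hv ↦
  le_trans hv (mul_le_mul_of_nonneg_right h (abs_nonneg _))

theorem abs_wedge_direction_sub_le (z z' : ℝ) (v : Fin 2 → ℝ) :
    |wedge (direction z) v| ≤ |wedge (direction z') v| + |z - z'| * |v 1| := by
  rw [← abs_mul]
  refine (abs_add_le _ _).trans' (le_of_eq ?_)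
  simp only [wedge_direction]
  ring_nf

theorem cone_subset_cone_of_abs_sub_le (h : |z' - z| ≤ τ) : cone z σ ⊆ cone z' (σ + τ) := by
  intro v hv
  have := abs_wedge_direction_sub_le z' z v
  have := mul_le_mul_of_nonneg_right h (abs_nonneg (v 1))
  simp only [mem_cone] at hv ⊢
  linarith

theorem isClosed_cone (z σ : ℝ) : IsClosed (cone z σ) := by
  refine isClosed_le ?_ (by fun_prop)
  simp only [wedge_direction]
  fun_prop

theorem direction_mem_cone : direction z' ∈ cone z σ ↔ |z - z'| ≤ σ := by
  rw [mem_cone, wedge_direction]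
  simp [direction]

theorem apply_one_ne_zero_of_mem_cone (hv : v ∈ cone z σ) (hv0 : v ≠ 0) : v 1 ≠ 0 := by
  intro h1
  have h0 : v 0 = 0 := by simpa [cone, wedge_direction, h1] using hv
  exact hv0 (by ext i; fin_cases i <;> simp [h0, h1])

theorem smul_mem_cone (c : ℝ) (hv : v ∈ cone z σ) : c • v ∈ cone z σ := by
  simp only [mem_cone, wedge_smul, abs_mul, Pi.smul_apply, smul_eq_mul] at hv ⊢
  nlinarith [abs_nonneg c]

theorem ne_zero_left_of_abs_wedge_eq_one (h : |wedge a e| = 1) : a ≠ 0 := by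
  rintro rfl
  simp [wedge] at h

theorem abs_wedge_le_of_mem_cone (hv : v ∈ cone z σ) :
    |wedge v w| ≤ |v 1| * (|wedge (direction z) w| + σ * |w 1|) := by
  rw [wedge_eq_sub z v w]
  refine (abs_sub _ _).trans ?_
  rw [abs_mul, abs_mul]
  nlinarith [mul_le_mul_of_nonneg_left hv (abs_nonneg (w 1))]

theorem le_abs_wedge_of_mem_cone (hv : v ∈ cone z σ) :
    |v 1| * (|wedge (direction z) w| - σ * |w 1|) ≤ |wedge v w| := by
  rw [wedge_eq_sub z v w]
  refine (abs_sub_abs_le_abs_sub _ _).trans' ?_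
  rw [abs_mul, abs_mul]
  nlinarith [mul_le_mul_of_nonneg_left hv (abs_nonneg (w 1))]

theorem abs_sub_mul_le_of_mem_cone (ξ : ℝ) (hv : v ∈ cone η σ) :
    (|ξ - η| - σ) * |v 1| ≤ |wedge (direction ξ) v| := by
  have h : |ξ - η| * |v 1| ≤ |wedge (direction ξ) v| + |wedge (direction η) v| := by
    rw [← abs_mul]
    refine (abs_sub _ _).trans' (le_of_eq ?_)
    simp only [wedge_direction]
    ring_nf
  simp only [mem_cone] at hv
  linarith

theorem abs_apply_one_le_of_mem_cone (hd : 1 ≤ |ξ - η|) (hσ : 8 * σ ≤ 1) (hv : v ∈ cone η σ) :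
    |v 1| ≤ 8 * |wedge (direction ξ) v| := by
  nlinarith [abs_sub_mul_le_of_mem_cone ξ hv, abs_nonneg (v 1)]

/-- Away from the direction of slope `z`, the size of `wedge u w` is nearly proportional to
`|u 1|` for `u` in a narrow cone around that direction. -/
theorem abs_wedge_ratio_le {K : ℝ} (hK : 0 ≤ K) (hσ : 0 ≤ σ) (hKσ : K * σ ≤ 1)
    (hu : u ∈ cone z σ) (hu' : u' ∈ cone z σ) (hw : |w 1| ≤ K * |wedge (direction z) w|) :
    (1 - K * σ) * |u 1| * |wedge u' w| ≤ (1 + K * σ) * |u' 1| * |wedge u w| := by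
  set D := |wedge (direction z) w|
  have hlow : |u 1| * ((1 - K * σ) * D) ≤ |wedge u w| :=
    (le_abs_wedge_of_mem_cone hu).trans' (by gcongr; nlinarith)
  have hupp : |wedge u' w| ≤ |u' 1| * ((1 + K * σ) * D) :=
    (abs_wedge_le_of_mem_cone hu').trans (by gcongr; nlinarith)
  calc (1 - K * σ) * |u 1| * |wedge u' w|
      ≤ (1 - K * σ) * |u 1| * (|u' 1| * ((1 + K * σ) * D)) := by
        gcongr
    _ = (1 + K * σ) * |u' 1| * (|u 1| * ((1 - K * σ) * D)) := by ring
    _ ≤ (1 + K * σ) * |u' 1| * |wedge u w| := by gcongr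

end Cones

section Frames

variable {ξ η ξ' η' σ τ : ℝ} {h : SL(2, ℤ)} {a e b f v : Fin 2 → ℝ}

/-- A unimodular frame `(a, e)` whose vectors point in the directions of slopes `ξ` and `η` up to
an error `σ`. -/
structure IsAdapted (ξ η σ : ℝ) (a e : Fin 2 → ℝ) : Prop where
  abs_wedge : |wedge a e| = 1
  left_mem : a ∈ cone ξ σ
  right_mem : e ∈ cone η σ

namespace IsAdapted

theorem symm (H : IsAdapted ξ η σ a e) : IsAdapted η ξ σ e a :=
  ⟨abs_wedge_comm e a ▸ H.abs_wedge, H.right_mem, H.left_mem⟩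

theorem mono (H : IsAdapted ξ η σ a e) (hστ : σ ≤ τ) : IsAdapted ξ η τ a e :=
  ⟨H.abs_wedge, cone_subset_cone hστ H.left_mem, cone_subset_cone hστ H.right_mem⟩

theorem of_abs_sub_le (H : IsAdapted ξ η σ a e) (hξ : |ξ' - ξ| ≤ τ)
    (hη : |η' - η| ≤ τ) : IsAdapted ξ' η' (σ + τ) a e :=
  ⟨H.abs_wedge, cone_subset_cone_of_abs_sub_le hξ H.left_mem,
    cone_subset_cone_of_abs_sub_le hη H.right_mem⟩

theorem left_pos (H : IsAdapted ξ η σ a e) : 0 < |a 1| :=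
  abs_pos.2 (apply_one_ne_zero_of_mem_cone H.left_mem
    (ne_zero_left_of_abs_wedge_eq_one H.abs_wedge))

theorem right_pos (H : IsAdapted ξ η σ a e) : 0 < |e 1| := H.symm.left_pos

theorem mul_le_one (H : IsAdapted ξ η σ a e) : |a 1| * |e 1| * (|ξ - η| - 2 * σ) ≤ 1 := by
  have h1 := le_abs_wedge_of_mem_cone (w := e) H.left_mem
  have h2 := mul_le_mul_of_nonneg_left (abs_sub_mul_le_of_mem_cone ξ H.right_mem)
    (abs_nonneg (a 1))
  rw [H.abs_wedge] at h1
  linarith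

theorem one_le_mul (H : IsAdapted ξ η σ a e) : 1 ≤ |a 1| * |e 1| * (|ξ - η| + 2 * σ) := by
  have h1 := abs_wedge_le_of_mem_cone (w := e) H.left_mem
  have h2 := mul_le_mul_of_nonneg_left
    ((abs_wedge_direction_sub_le ξ η e).trans (add_le_add_left H.right_mem _)) (abs_nonneg (a 1))
  rw [H.abs_wedge] at h1
  linarith

theorem abs_mul_abs_le (hd : 1 ≤ |ξ - η|) (hσ : 0 ≤ σ) (hσ' : 8 * σ < 1)
    (H : IsAdapted ξ η σ a e) (H' : IsAdapted ξ η σ (h • a) (h • e))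
    (G : IsAdapted ξ η σ b f) (G' : IsAdapted ξ η σ (h • b) (h • f)) :
    (1 - 8 * σ) ^ 2 * (|e 1| * |(h • a) 1|) ≤ (1 + 8 * σ) ^ 2 * (|f 1| * |(h • b) 1|) := by
  have he := abs_wedge_ratio_le (by norm_num) hσ hσ'.le H.right_mem G.right_mem
    (abs_apply_one_le_of_mem_cone (abs_sub_comm ξ η ▸ hd) hσ'.le G.left_mem)
  have ha := abs_wedge_ratio_le (by norm_num) hσ hσ'.le H'.left_mem G'.left_mem
    (abs_apply_one_le_of_mem_cone hd hσ'.le H'.right_mem)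
  rw [abs_wedge_comm, G.abs_wedge, mul_one] at he
  rw [H'.abs_wedge, mul_one, wedge_smul_smul, abs_wedge_comm] at ha
  have hpos : 0 < |wedge e b| := by
    by_contra! hneg
    nlinarith [mul_pos (sub_pos.2 hσ') H.right_pos,
      mul_nonneg (by linarith : 0 ≤ 1 + 8 * σ) (abs_nonneg (f 1))]
  refine le_of_mul_le_mul_right ?_ hpos
  calc (1 - 8 * σ) ^ 2 * (|e 1| * |(h • a) 1|) * |wedge e b|
      = ((1 - 8 * σ) * |e 1|) * ((1 - 8 * σ) * |(h • a) 1| * |wedge e b|) := by ring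
    _ ≤ ((1 + 8 * σ) * |f 1| * |wedge e b|) * ((1 + 8 * σ) * |(h • b) 1|) :=
        mul_le_mul he ha (by have := hσ'.le; positivity) (by positivity)
    _ = _ := by ring

/-- As `v` is away from the direction of `η` and `h • v` from that of `ξ`, the factors `wedge e v`
are compared before applying `h`, and the factors `wedge a v` after. -/
theorem absForm_le (hd : 1 ≤ |ξ - η|) (hσ : 0 ≤ σ) (hσ' : 8 * σ < 1)
    (H : IsAdapted ξ η σ a e) (H' : IsAdapted ξ η σ (h • a) (h • e))
    (G : IsAdapted ξ η σ b f) (G' : IsAdapted ξ η σ (h • b) (h • f))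
    (hv : v ∈ cone ξ (1 / 8)) (hv' : h • v ∉ cone ξ (1 / 8)) :
    (1 - 8 * σ) ^ 4 * absForm a e v ≤ (1 + 8 * σ) ^ 4 * absForm b f v := by
  have hσ'' : 0 ≤ 1 - 8 * σ := by linarith
  rw [mem_cone, not_le] at hv'
  have he := abs_wedge_ratio_le (by norm_num) hσ hσ'.le G.right_mem H.right_mem
    (abs_apply_one_le_of_mem_cone (abs_sub_comm ξ η ▸ hd) (by norm_num) hv)
  have ha := abs_wedge_ratio_le (K := 8) (by norm_num) hσ hσ'.le G'.left_mem H'.left_mem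
    (w := h • v) (by linarith)
  rw [wedge_smul_smul, wedge_smul_smul] at ha
  refine le_of_mul_le_mul_left ?_ (mul_pos G.right_pos G'.left_pos)
  calc |f 1| * |(h • b) 1| * ((1 - 8 * σ) ^ 4 * absForm a e v)
      = (1 - 8 * σ) ^ 2 * (((1 - 8 * σ) * |(h • b) 1| * |wedge a v|) *
          ((1 - 8 * σ) * |f 1| * |wedge e v|)) := by rw [absForm]; ring
    _ ≤ (1 - 8 * σ) ^ 2 * (((1 + 8 * σ) * |(h • a) 1| * |wedge b v|) *
          ((1 + 8 * σ) * |e 1| * |wedge f v|)) := by gcongr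
    _ = (1 - 8 * σ) ^ 2 * (|e 1| * |(h • a) 1|) * ((1 + 8 * σ) ^ 2 * absForm b f v) := by
        rw [absForm]; ring
    _ ≤ (1 + 8 * σ) ^ 2 * (|f 1| * |(h • b) 1|) * ((1 + 8 * σ) ^ 2 * absForm b f v) := by
        rw [absForm]
        gcongr ?_ * _
        exact abs_mul_abs_le hd hσ hσ' H H' G G'
    _ = _ := by ring

end IsAdapted

/-- The matrix `h` moves a frame adapted to `(ξ, η)` to another such frame, contracting the first
vector and expanding the second one by a factor of at least `τ⁻¹`. -/
structure IsHyperbolic (ξ η τ : ℝ) (h : SL(2, ℤ)) (a e : Fin 2 → ℝ) : Prop where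
  source : IsAdapted ξ η τ a e
  target : IsAdapted ξ η τ (h • a) (h • e)
  contract : |(h • a) 1| ≤ τ * |a 1|
  expand : |e 1| ≤ τ * |(h • e) 1|

namespace IsHyperbolic

theorem inv (H : IsHyperbolic ξ η τ h a e) : IsHyperbolic η ξ τ h⁻¹ (h • e) (h • a) where
  source := H.target.symm
  target := by simpa only [inv_smul_smul] using H.source.symm
  contract := by simpa only [inv_smul_smul] using H.expand
  expand := by simpa only [inv_smul_smul] using H.contract

theorem nonneg (H : IsHyperbolic ξ η τ h a e) : 0 ≤ τ :=
  nonneg_of_mul_nonneg_left ((abs_nonneg _).trans H.contract) H.source.left_pos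

theorem abs_wedge_direction_sub_le_mul (H : IsHyperbolic ξ η τ h a e) (v : Fin 2 → ℝ) :
    |wedge (direction ξ) v| - τ * |v 1| ≤
      τ * (|wedge (direction ξ) (h • v)| + τ * |(h • v) 1|) := by
  have hτ := H.nonneg
  refine le_of_mul_le_mul_left ?_ H.source.left_pos
  calc |a 1| * (|wedge (direction ξ) v| - τ * |v 1|)
      ≤ |wedge a v| := le_abs_wedge_of_mem_cone H.source.left_mem
    _ = |wedge (h • a) (h • v)| := by rw [wedge_smul_smul]
    _ ≤ |(h • a) 1| * (|wedge (direction ξ) (h • v)| + τ * |(h • v) 1|) :=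
        abs_wedge_le_of_mem_cone H.target.left_mem
    _ ≤ τ * |a 1| * (|wedge (direction ξ) (h • v)| + τ * |(h • v) 1|) := by
        gcongr
        exact H.contract
    _ = _ := by ring

/-- Going from `h • v` back to `v`, the component along `a` is expanded and the one along `e` is
contracted. -/
theorem mem_cone_of_smul_mem_cone (H : IsHyperbolic ξ η τ h a e) (hd : 1 ≤ |ξ - η|)
    (hτ : τ ≤ 1 / 64) (hv : h • v ∈ cone ξ (1 / 8)) :
    v ∈ cone ξ (2 * τ) ∧ |(h • v) 1| ≤ 2 * τ * |v 1| := by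
  have hτ0 := H.nonneg
  have hleft := H.abs_wedge_direction_sub_le_mul v
  have hright := H.inv.abs_wedge_direction_sub_le_mul (h • v)
  rw [inv_smul_smul] at hright
  have hη := abs_wedge_direction_sub_le η ξ v
  have hη' := abs_sub_mul_le_of_mem_cone η hv
  rw [mem_cone] at hv ⊢
  rw [abs_sub_comm η ξ] at hη hη'
  set x := |wedge (direction ξ) v|
  set d := |ξ - η|
  set y := |v 1|
  set y' := |(h • v) 1|
  have hy : 0 ≤ y := abs_nonneg _
  have hy' : 0 ≤ y' := abs_nonneg _
  have hx : x ≤ τ * y + τ * (1 / 8 + τ) * y' := by nlinarith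
  have hexp : (d - 1 / 8 - τ) * y' ≤ τ * (x + (d + τ) * y) := by nlinarith
  have hshrink : y' ≤ 2 * τ * y := by
    have hsmall : τ * (τ * (1 / 8 + τ)) ≤ 1 / 64 :=
      calc τ * (τ * (1 / 8 + τ)) ≤ 1 / 64 * (1 / 64 * (1 / 8 + 1 / 64)) := by gcongr
        _ ≤ 1 / 64 := by norm_num
    have hlow : d * (27 / 32 * y') ≤ (d - 1 / 8 - τ - τ * (τ * (1 / 8 + τ))) * y' := by nlinarith
    have hupp : τ * ((d + 2 * τ) * y) ≤ d * (33 / 32 * (τ * y)) := by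
      nlinarith [mul_nonneg hτ0 hy]
    have : 27 / 32 * y' ≤ 33 / 32 * (τ * y) := by
      refine le_of_mul_le_mul_left ?_ (zero_lt_one.trans_le hd)
      nlinarith [mul_le_mul_of_nonneg_left hx hτ0]
    linarith [mul_nonneg hτ0 hy]
  have hτ1 : (1 / 8 + τ) * y' ≤ y := by nlinarith
  refine ⟨?_, hshrink⟩
  nlinarith [mul_le_mul_of_nonneg_left hτ1 hτ0]

end IsHyperbolic

end Frames

section Normalization

variable {ξ η s σ : ℝ} {a e v w : Fin 2 → ℝ}

theorem IsAdapted.absForm_mul_le (H : IsAdapted ξ η σ a e) (hσ : 2 * σ ≤ |ξ - η|)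
    (v : Fin 2 → ℝ) : absForm a e v * (|ξ - η| - 2 * σ) ≤
      (|wedge (direction ξ) v| + σ * |v 1|) * (|wedge (direction η) v| + σ * |v 1|) := by
  have : 0 ≤ |ξ - η| - 2 * σ := sub_nonneg.2 hσ
  have hξ := abs_wedge_le_of_mem_cone (w := v) H.left_mem
  have hη := abs_wedge_le_of_mem_cone (w := v) H.right_mem
  have hξ0 := nonneg_of_mul_nonneg_right ((abs_nonneg _).trans hξ) H.left_pos
  have hη0 := nonneg_of_mul_nonneg_right ((abs_nonneg _).trans hη) H.right_pos
  set x := |wedge (direction ξ) v| + σ * |v 1|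
  set y := |wedge (direction η) v| + σ * |v 1|
  calc absForm a e v * (|ξ - η| - 2 * σ)
      ≤ (|a 1| * x) * (|e 1| * y) * (|ξ - η| - 2 * σ) := by
        rw [absForm]
        gcongr
    _ = (|a 1| * |e 1| * (|ξ - η| - 2 * σ)) * (x * y) := by ring
    _ ≤ 1 * (x * y) := by
        gcongr
        exact H.mul_le_one
    _ = x * y := one_mul _

theorem mem_cone_div (hv : v 1 ≠ 0) : v ∈ cone (v 0 / v 1) 0 := by
  rw [mem_cone, wedge_direction, div_mul_cancel₀ _ hv]
  simp

theorem direction_div (hv : v 1 ≠ 0) : direction (v 0 / v 1) = (v 1)⁻¹ • v := by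
  ext i
  fin_cases i <;> simp [direction, hv, div_eq_inv_mul]

theorem one_le_abs_of_mem_integerLattice (hw : w ∈ integerLattice) {i : Fin 2} (hi : w i ≠ 0) :
    1 ≤ |w i| := by
  obtain ⟨n, rfl⟩ := hw
  beta_reduce at hi ⊢
  exact_mod_cast Int.one_le_abs (Int.cast_ne_zero.1 hi)

theorem one_le_abs_apply_zero (hw : w ∈ integerLattice) (hw0 : w ≠ 0) (hw1 : w 1 = 0) :
    1 ≤ |w 0| :=
  one_le_abs_of_mem_integerLattice hw fun h ↦ hw0 (by ext i; fin_cases i <;> simp [h, hw1])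

theorem one_le_abs_apply_one_of_mem_cone (hv : v ∈ integerLattice) (hv0 : v ≠ 0) {σ : ℝ}
    (hvξ : v ∈ cone ξ σ) : 1 ≤ |v 1| :=
  one_le_abs_of_mem_integerLattice hv (apply_one_ne_zero_of_mem_cone hvξ hv0)

theorem exists_smul_eq_smul_horizontal (hw : w ∈ integerLattice) (hw0 : w ≠ 0) :
    ∃ (M : SL(2, ℤ)) (d : ℝ), 1 ≤ |d| ∧ M • w = d • horizontal := by
  obtain ⟨n, rfl⟩ := hw
  have hg : 0 < Int.gcd (n 0) (n 1) := by
    refine Nat.pos_of_ne_zero fun h ↦ hw0 ?_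
    rw [Int.gcd_eq_zero_iff] at h
    ext i
    fin_cases i <;> simp [h]
  obtain ⟨p, q, hpq, hp, hq⟩ := Int.exists_gcd_one hg
  obtain ⟨N, hN0, hN1⟩ := (Int.isCoprime_iff_gcd_eq_one.2 hpq).exists_SL2_col 0
  refine ⟨N⁻¹, Int.gcd (n 0) (n 1), ?_, ?_⟩
  · rw [Nat.abs_cast]
    exact_mod_cast hg
  · rw [inv_smul_eq_iff]
    have hp' : (n 0 : ℝ) = p * Int.gcd (n 0) (n 1) := by exact_mod_cast hp
    have hq' : (n 1 : ℝ) = q * Int.gcd (n 0) (n 1) := by exact_mod_cast hq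
    ext i
    fin_cases i <;> simp [smul_apply, horizontal, hN0, hN1, hp', hq']

theorem T_zpow_smul_apply_zero (n : ℤ) (v : Fin 2 → ℝ) :
    (ModularGroup.T ^ n • v) 0 = v 0 + n * v 1 := by
  simp [smul_apply, ModularGroup.coe_T_zpow]

theorem T_zpow_smul_apply_one (n : ℤ) (v : Fin 2 → ℝ) : (ModularGroup.T ^ n • v) 1 = v 1 := by
  simp [smul_apply, ModularGroup.coe_T_zpow]

theorem exists_isAdapted_smul (hae : |wedge a e| = 1) (hw : w ∈ integerLattice)
    (ha : wedge a w ≠ 0) (he : wedge e w ≠ 0) :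
    ∃ (M : SL(2, ℤ)) (ξ η : ℝ), η ∈ Icc (0 : ℝ) 1 ∧ IsAdapted ξ η 0 (M • a) (M • e) ∧
      |(M • a) 1| ≤ |wedge a w| ∧ |(M • e) 1| ≤ |wedge e w| := by
  have hw0 : w ≠ 0 := fun h ↦ ha (by simp [h, wedge])
  obtain ⟨M, d, hd, hM⟩ := exists_smul_eq_smul_horizontal hw hw0
  have hwedge (v : Fin 2 → ℝ) : |wedge v w| = |d| * |(M • v) 1| := by
    rw [← wedge_smul_smul M, hM, wedge_smul, abs_mul, abs_wedge_comm, wedge_horizontal]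
  set n : ℤ := -⌊(M • e) 0 / (M • e) 1⌋
  set M' := ModularGroup.T ^ n * M
  have hone (v : Fin 2 → ℝ) : (M' • v) 1 = (M • v) 1 := by
    rw [mul_smul, T_zpow_smul_apply_one]
  have hle (v : Fin 2 → ℝ) : |(M' • v) 1| ≤ |wedge v w| := by
    rw [hone, hwedge]
    exact le_mul_of_one_le_left (abs_nonneg _) hd
  have hne {v : Fin 2 → ℝ} (hv : wedge v w ≠ 0) : (M' • v) 1 ≠ 0 := by
    rw [← abs_pos, hwedge] at hv
    exact hone v ▸ abs_pos.1 (pos_of_mul_pos_right hv (abs_nonneg d))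
  refine ⟨M', (M' • a) 0 / (M' • a) 1, (M' • e) 0 / (M' • e) 1, ?_,
    ⟨(wedge_smul_smul M' a e).symm ▸ hae, mem_cone_div (hne ha), mem_cone_div (hne he)⟩,
    hle a, hle e⟩
  have hη : (M' • e) 0 / (M' • e) 1 = Int.fract ((M • e) 0 / (M • e) 1) := by
    have := hone e ▸ hne he
    rw [hone, mul_smul, T_zpow_smul_apply_zero, Int.fract]
    simp only [n]
    field_simp
    push_cast
    ring
  rw [hη]
  exact ⟨Int.fract_nonneg _, (Int.fract_lt_one _).le⟩

theorem exists_isAdapted_smul_of_mul_absForm_lt_one (hae : |wedge a e| = 1)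
    (hw : w ∈ integerLattice) (hpos : 0 < absForm a e w) (hs : s * absForm a e w < 1) :
    ∃ (M : SL(2, ℤ)) (ξ η : ℝ), η ∈ Icc (0 : ℝ) 1 ∧ s < |ξ - η| ∧
      IsAdapted ξ η 0 (M • a) (M • e) ∧ |(M • a) 1| ≤ |wedge a w| := by
  have ha : wedge a w ≠ 0 := fun h ↦ hpos.ne' (by simp [absForm, h])
  have he : wedge e w ≠ 0 := fun h ↦ hpos.ne' (by simp [absForm, h])
  obtain ⟨M, ξ, η, hη, H, hMa, hMe⟩ := exists_isAdapted_smul hae hw ha he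
  refine ⟨M, ξ, η, hη, lt_of_mul_lt_mul_right (hs.trans_le ?_) hpos.le, H, hMa⟩
  calc 1 ≤ |(M • a) 1| * |(M • e) 1| * (|ξ - η| + 2 * 0) := H.one_le_mul
    _ ≤ |wedge a w| * |wedge e w| * (|ξ - η| + 2 * 0) := by gcongr
    _ = |ξ - η| * absForm a e w := by rw [absForm]; ring

theorem exists_tendsto_subseq_of_abs_sub_tendsto {ξ η : ℕ → ℝ} {t : ℝ}
    (hη : ∀ n, η n ∈ Icc (0 : ℝ) 1) (ht : Tendsto (fun n ↦ |ξ n - η n|) atTop (𝓝 t)) :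
    ∃ (ξ' η' : ℝ) (φ : ℕ → ℕ), |ξ' - η'| = t ∧ η' ∈ Icc (0 : ℝ) 1 ∧ StrictMono φ ∧
      Tendsto (ξ ∘ φ) atTop (𝓝 ξ') ∧ Tendsto (η ∘ φ) atTop (𝓝 η') := by
  obtain ⟨C, hC⟩ := ht.bddAbove_range
  have hmem (n : ℕ) : (ξ n, η n) ∈ Icc (-C) (C + 1) ×ˢ Icc (0 : ℝ) 1 := by
    have := abs_le.1 (hC (mem_range_self n))
    have := hη n
    exact ⟨⟨by linarith [this.1], by linarith [this.2]⟩, this⟩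
  obtain ⟨⟨ξ', η'⟩, hmem', φ, hφ, hlim⟩ :=
    (isCompact_Icc.prod isCompact_Icc).tendsto_subseq hmem
  have hξ' : Tendsto (ξ ∘ φ) atTop (𝓝 ξ') := (continuous_fst.tendsto _).comp hlim
  have hη' : Tendsto (η ∘ φ) atTop (𝓝 η') := (continuous_snd.tendsto _).comp hlim
  exact ⟨ξ', η', φ, tendsto_nhds_unique (hξ'.sub hη').abs (ht.comp hφ.tendsto_atTop), hmem'.2,
    hφ, hξ', hη'⟩

end Normalization

section LagrangeValue

variable {α s t : ℝ} {w : Fin 2 → ℝ}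

theorem absForm_direction_horizontal (α : ℝ) (w : Fin 2 → ℝ) :
    absForm (direction α) horizontal w = |w 1| * |wedge (direction α) w| := by
  rw [absForm, wedge_horizontal, mul_comm]

theorem exists_mem_integerLattice_abs_wedge_eq (α : ℝ) (q : ℕ) :
    ∃ w ∈ integerLattice, |w 1| = q ∧ |wedge (direction α) w| = distNearestInt (q * α) := by
  refine ⟨fun i ↦ (![round (q * α), (q : ℤ)] i : ℤ), mem_range_self _, by simp, ?_⟩
  simp [wedge_direction, distNearestInt, mul_comm]

theorem exists_nat_distNearestInt_le (α : ℝ) (hw : w ∈ integerLattice) :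
    ∃ q : ℕ, |w 1| = q ∧ distNearestInt (q * α) ≤ |wedge (direction α) w| := by
  obtain ⟨n, rfl⟩ := hw
  refine ⟨(n 1).natAbs, by simp [Nat.cast_natAbs], ?_⟩
  rw [wedge_direction]
  rcases Int.natAbs_eq (n 1) with h | h
  · have hn : (n 1 : ℝ) = (n 1).natAbs := (congrArg Int.cast h).trans (Int.cast_natCast _)
    simp only [hn, mul_comm α]
    exact round_le _ _
  · have hn : (n 1 : ℝ) = -(n 1).natAbs := by exact_mod_cast h
    refine (round_le _ (-n 0)).trans (le_of_eq ?_)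
    rw [← abs_neg]
    simp only [hn]
    push_cast
    ring_nf

theorem distNearestInt_pos (hα : Irrational α) {q : ℕ} (hq : q ≠ 0) :
    0 < distNearestInt (q * α) :=
  abs_pos.2 (sub_ne_zero.2 ((hα.natCast_mul hq).ne_int _))

/-- The inequality `1 / (q * ‖q * α‖) ≤ s` for all large `q`, in the form that the action of
`SL(2, ℤ)` can transport: the denominator is a value of the form with roots `α` and `∞`. -/
def IsEventualBound (α s : ℝ) : Prop :=
  ∃ N : ℝ, ∀ w ∈ integerLattice, N ≤ |w 1| → 1 ≤ s * absForm (direction α) horizontal w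

theorem one_div_le_iff (hα : Irrational α) {q : ℕ} (hq : q ≠ 0) :
    1 / (q * distNearestInt (q * α)) ≤ s ↔ 1 ≤ s * (q * distNearestInt (q * α)) :=
  div_le_iff₀ (mul_pos (Nat.cast_pos.2 (Nat.pos_of_ne_zero hq)) (distNearestInt_pos hα hq))

theorem lagrangeVal_le_of_isEventualBound (hα : Irrational α) (h : IsEventualBound α s) :
    lagrangeVal α ≤ ENNReal.ofReal s := by
  obtain ⟨N, hN⟩ := h
  refine limsup_le_of_le (by isBoundedDefault) ?_
  filter_upwards [eventually_ge_atTop ⌈N⌉₊, eventually_ne_atTop 0] with q hNq hq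
  obtain ⟨w, hw, hw1, hdist⟩ := exists_mem_integerLattice_abs_wedge_eq α q
  have hval := hN w hw (hw1 ▸ Nat.ceil_le.1 hNq)
  rw [absForm_direction_horizontal, hw1, hdist] at hval
  exact ENNReal.ofReal_le_ofReal ((one_div_le_iff hα hq).2 hval)

theorem isEventualBound_of_lagrangeVal_lt (hα : Irrational α)
    (h : lagrangeVal α < ENNReal.ofReal s) : IsEventualBound α s := by
  have hs : 0 < s := ENNReal.ofReal_pos.1 (zero_le.trans_lt h)
  obtain ⟨N, hN⟩ := eventually_atTop.1 (eventually_lt_of_limsup_lt h)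
  refine ⟨N + 1, fun w hw hw1 ↦ ?_⟩
  obtain ⟨q, hq, hdist⟩ := exists_nat_distNearestInt_le α hw
  rw [hq] at hw1
  have hq' : N + 1 ≤ q := by exact_mod_cast hw1
  have hlt := (one_div_le_iff hα (by omega)).1
    ((ENNReal.ofReal_lt_ofReal_iff hs).1 (hN q (by omega))).le
  rw [absForm_direction_horizontal, hq]
  exact hlt.trans (by gcongr)

theorem exists_pos_forall_lt_abs (hα : Irrational α) (N : ℝ) :
    ∃ δ > 0, ∀ w ∈ integerLattice, w ≠ 0 → |wedge (direction α) w| < δ → N < |w 1| := by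
  have hsmall : ∀ᶠ δ in 𝓝[>] (0 : ℝ), ∀ q ∈ Finset.Icc 1 ⌈N⌉₊, δ < distNearestInt (q * α) := by
    refine (Filter.eventually_all_finset _).2 fun q hq ↦ ?_
    have := distNearestInt_pos hα (by rw [Finset.mem_Icc] at hq; omega : q ≠ 0)
    exact mem_nhdsWithin_of_mem_nhds (Iio_mem_nhds this)
  obtain ⟨δ, hδ, hδ0, hδ1⟩ := (hsmall.and (Ioo_mem_nhdsGT one_pos)).exists
  refine ⟨δ, hδ0, fun w hw hw0 hwδ ↦ ?_⟩
  obtain ⟨q, hq, hdist⟩ := exists_nat_distNearestInt_le α hw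
  by_contra! hle
  rcases Nat.eq_zero_or_pos q with rfl | hq0
  · have hw1 : w 1 = 0 := by simpa using hq
    rw [wedge_direction, hw1, mul_zero, zero_sub, abs_neg] at hwδ
    linarith [one_le_abs_apply_zero hw hw0 hw1, hδ1]
  · refine (hδ q (Finset.mem_Icc.2 ⟨hq0, ?_⟩)).not_ge (hdist.trans hwδ.le)
    exact_mod_cast (hq ▸ hle).trans (Nat.le_ceil N)

theorem one_le_lagrangeVal (hα : Irrational α) : 1 ≤ lagrangeVal α := by
  by_contra! hlt
  obtain ⟨s, hs, hlts⟩ : ∃ s < 1, lagrangeVal α < ENNReal.ofReal s := by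
    obtain ⟨s, -, hs, hs1⟩ := ENNReal.lt_iff_exists_real_btwn.1 hlt
    exact ⟨s, ENNReal.ofReal_lt_one.1 hs1, hs⟩
  obtain ⟨N, hN⟩ := isEventualBound_of_lagrangeVal_lt hα hlts
  obtain ⟨δ, hδ, hlarge⟩ := exists_pos_forall_lt_abs hα N
  obtain ⟨n, hn⟩ := exists_nat_one_div_lt hδ
  obtain ⟨k, hk0, hkn, hk⟩ := Real.exists_nat_abs_mul_sub_round_le α n.succ_pos
  obtain ⟨w, hw, hw1, hdist⟩ := exists_mem_integerLattice_abs_wedge_eq α k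
  have hk' : |wedge (direction α) w| ≤ 1 / (n + 1) := by
    rw [hdist]
    refine hk.trans ?_
    gcongr
    simp
  have hw0 : w ≠ 0 := by
    rintro rfl
    exact hk0.ne' (by simpa using hw1.symm)
  have hval : absForm (direction α) horizontal w ≤ 1 :=
    calc absForm (direction α) horizontal w = k * |wedge (direction α) w| := by
          rw [absForm_direction_horizontal, hw1]
      _ ≤ (n + 1) * (1 / (n + 1)) := by
          gcongr
          exact_mod_cast hkn
      _ = 1 := mul_one_div_cancel (by positivity)
  have hge := hN w hw (hlarge w hw hw0 (hk'.trans_lt hn)).le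
  have h0 := absForm_nonneg (direction α) horizontal w
  have h1 := hge.trans (mul_le_of_le_one_left h0 hs.le)
  nlinarith

theorem mem_lagrangeSpectrum_iff :
    t ∈ LagrangeSpectrum ↔ 1 ≤ t ∧ ∃ α, Irrational α ∧ lagrangeVal α = ENNReal.ofReal t := by
  constructor
  · rintro ⟨α, hα, hfin, rfl⟩
    exact ⟨by simpa using ENNReal.toReal_mono hfin (one_le_lagrangeVal hα), α, hα,
      (ENNReal.ofReal_toReal hfin).symm⟩
  · rintro ⟨ht, α, hα, h⟩
    exact ⟨α, hα, h ▸ ENNReal.ofReal_ne_top, by rw [h, ENNReal.toReal_ofReal (by linarith)]⟩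

end LagrangeValue

section Markov

variable {s t ξ η : ℝ}

theorem mem_markovSpectrum_of_abs_sub_eq (ht : 0 < t) (hd : |ξ - η| = t)
    (h : ∀ w ∈ integerLattice, w ≠ 0 → 1 ≤ absForm (direction ξ) (direction η) w) :
    t ∈ MarkovSpectrum := by
  have hdisc : (-(ξ + η)) ^ 2 - 4 * 1 * (ξ * η) = t ^ 2 := by
    rw [← hd, sq_abs]
    ring
  have hm : markovVal 1 (-(ξ + η)) (ξ * η) = ENNReal.ofReal t := by
    simp only [markovVal, hdisc, Real.sqrt_sq ht.le]
    refine le_antisymm (iSup₂_le fun v hv ↦ ?_) (le_iSup₂_of_le (1, 0) (by simp) (by simp))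
    refine ENNReal.div_le_of_le_mul ?_
    rw [← ENNReal.ofReal_mul ht.le]
    refine ENNReal.ofReal_le_ofReal (le_mul_of_one_le_right ht.le ?_)
    refine (h (fun i ↦ (![v.1, v.2] i : ℤ)) (mem_range_self _) fun h0 ↦ hv ?_).trans_eq ?_
    · exact Prod.ext (by simpa using congrFun h0 0) (by simpa using congrFun h0 1)
    · rw [absForm, ← abs_mul, wedge_direction, wedge_direction]
      simp only [Matrix.cons_val_zero, Matrix.cons_val_one]
      ring_nf
  exact ⟨1, -(ξ + η), ξ * η, by rw [hdisc]; positivity, hm ▸ ENNReal.ofReal_ne_top,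
    by rw [hm, ENNReal.toReal_ofReal ht.le]⟩

theorem exists_absForm_eq_div_sqrt {a b c : ℝ} (ha : a ≠ 0) (hΔ : 0 < b ^ 2 - 4 * a * c) :
    ∃ u v : Fin 2 → ℝ, |wedge u v| = 1 ∧ ∀ w : Fin 2 → ℝ,
      absForm u v w = |a * w 0 ^ 2 + b * w 0 * w 1 + c * w 1 ^ 2| / √(b ^ 2 - 4 * a * c) := by
  set r := √(b ^ 2 - 4 * a * c)
  have hr : 0 < r := Real.sqrt_pos.2 hΔ
  have hr2 : r ^ 2 = b ^ 2 - 4 * a * c := Real.sq_sqrt hΔ.le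
  refine ⟨direction ((-b + r) / (2 * a)), (a / r) • direction ((-b - r) / (2 * a)), ?_,
    fun w ↦ ?_⟩
  · rw [wedge_smul, wedge_direction]
    simp only [direction, Matrix.cons_val_zero, Matrix.cons_val_one]
    field_simp
    ring_nf
    rw [abs_mul, abs_inv, mul_inv_cancel₀ (abs_pos.2 hr.ne').ne']
  · rw [absForm, ← abs_mul, ← abs_of_pos hr, ← abs_div, abs_of_pos hr]
    congr 1
    simp only [wedge, direction, Pi.smul_apply, smul_eq_mul, Matrix.cons_val_zero,
      Matrix.cons_val_one]
    field_simp
    linear_combination (-w 1 ^ 2) * hr2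

theorem sqrt_le_markovVal_mul {a b c : ℝ} (hΔ : 0 < b ^ 2 - 4 * a * c)
    (hfin : markovVal a b c ≠ ⊤) {p q : ℤ} (hpq : (p, q) ≠ (0, 0)) :
    √(b ^ 2 - 4 * a * c) ≤
      (markovVal a b c).toReal * |a * (p : ℝ) ^ 2 + b * p * q + c * (q : ℝ) ^ 2| := by
  have hr := Real.sqrt_pos.2 hΔ
  have hle : _ ≤ markovVal a b c := le_iSup₂_of_le (p, q) hpq le_rfl
  have hne : |a * (p : ℝ) ^ 2 + b * p * q + c * (q : ℝ) ^ 2| ≠ 0 := fun h0 ↦ by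
    rw [h0, ENNReal.ofReal_zero, ENNReal.div_zero (ENNReal.ofReal_pos.2 hr).ne'] at hle
    exact hfin (top_le_iff.1 hle)
  have hle' := ENNReal.toReal_mono hfin hle
  rw [ENNReal.toReal_div, ENNReal.toReal_ofReal hr.le, ENNReal.toReal_ofReal (abs_nonneg _)]
    at hle'
  exact (div_le_iff₀ (lt_of_le_of_ne (abs_nonneg _) hne.symm)).1 hle'

theorem exists_mul_lt_sqrt_of_lt_markovVal {a b c : ℝ} (hs : 0 ≤ s)
    (h : ENNReal.ofReal s < markovVal a b c) :
    ∃ p q : ℤ, (p, q) ≠ (0, 0) ∧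
      s * |a * (p : ℝ) ^ 2 + b * p * q + c * (q : ℝ) ^ 2| < √(b ^ 2 - 4 * a * c) := by
  obtain ⟨⟨p, q⟩, h⟩ := lt_iSup_iff.1 h
  obtain ⟨hpq, h⟩ := lt_iSup_iff.1 h
  have hlt := ENNReal.mul_lt_of_lt_div h
  rw [← ENNReal.ofReal_mul hs] at hlt
  exact ⟨p, q, hpq, (ENNReal.ofReal_lt_ofReal_iff_of_nonneg (by positivity)).1 hlt⟩

theorem exists_frame_of_mem_markovSpectrum (h : t ∈ MarkovSpectrum) :
    ∃ a e : Fin 2 → ℝ, |wedge a e| = 1 ∧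
      (∀ w ∈ integerLattice, w ≠ 0 → 1 ≤ t * absForm a e w) ∧
      ∀ s, 0 ≤ s → s < t → ∃ w ∈ integerLattice, w ≠ 0 ∧ s * absForm a e w < 1 := by
  obtain ⟨a, b, c, hΔ, hfin, rfl⟩ := h
  have hr := Real.sqrt_pos.2 hΔ
  have ha : a ≠ 0 := by
    rintro rfl
    have := sqrt_le_markovVal_mul hΔ hfin (by simp : ((1 : ℤ), (0 : ℤ)) ≠ (0, 0))
    exact hr.not_ge (by simpa using this)
  obtain ⟨u, v, huv, hval⟩ := exists_absForm_eq_div_sqrt ha hΔ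
  refine ⟨u, v, huv, ?_, fun s hs0 hs ↦ ?_⟩
  · rintro _ ⟨n, rfl⟩ hn
    rw [hval, ← mul_div_assoc, one_le_div hr]
    refine sqrt_le_markovVal_mul hΔ hfin fun h0 ↦ hn ?_
    rw [Prod.mk.injEq] at h0
    ext i
    fin_cases i <;> simp [h0]
  · obtain ⟨p, q, hpq, hlt⟩ := exists_mul_lt_sqrt_of_lt_markovVal hs0
      ((ENNReal.ofReal_lt_iff_lt_toReal hs0 hfin).2 hs)
    refine ⟨_, ⟨![p, q], rfl⟩, fun h0 ↦ hpq ?_, ?_⟩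
    · exact Prod.ext (by simpa using congrFun h0 0) (by simpa using congrFun h0 1)
    · rw [hval, ← mul_div_assoc, div_lt_one hr]
      simpa using hlt

theorem pos_of_mem_markovSpectrum (h : t ∈ MarkovSpectrum) : 0 < t := by
  obtain ⟨a, e, -, hge, -⟩ := exists_frame_of_mem_markovSpectrum h
  have := hge _ horizontal_mem_integerLattice horizontal_ne_zero
  exact pos_of_mul_pos_left (one_pos.trans_le this) (absForm_nonneg _ _ _)

theorem exists_roots_of_mem_markovSpectrum (h : t ∈ MarkovSpectrum) (hs : s < t) :
    ∃ ξ η : ℝ, η ∈ Icc (0 : ℝ) 1 ∧ s < |ξ - η| ∧ ∀ w ∈ integerLattice, w ≠ 0 →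
      |ξ - η| ≤ t * absForm (direction ξ) (direction η) w := by
  obtain ⟨a, e, hae, hge, hlt⟩ := exists_frame_of_mem_markovSpectrum h
  have ht := pos_of_mem_markovSpectrum h
  obtain ⟨w, hw, hw0, hval⟩ := hlt (max s 0) (le_max_right _ _) (max_lt hs ht)
  have hpos : 0 < absForm a e w :=
    pos_of_mul_pos_right (one_pos.trans_le (hge w hw hw0)) ht.le
  obtain ⟨M, ξ, η, hη, hd, H, -⟩ :=
    exists_isAdapted_smul_of_mul_absForm_lt_one hae hw hpos hval
  refine ⟨ξ, η, hη, (le_max_left _ _).trans_lt hd, fun v hv hv0 ↦ ?_⟩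
  have hv' := hge (M⁻¹ • v) (smul_mem_integerLattice _ hv) (by rwa [Ne, smul_eq_zero_iff_eq])
  have hle := H.absForm_mul_le (by simp) v
  simp only [mul_zero, sub_zero, zero_mul, add_zero] at hle
  rw [absForm_inv_smul] at hv'
  calc |ξ - η| ≤ t * absForm (M • a) (M • e) v * |ξ - η| :=
        le_mul_of_one_le_left (abs_nonneg _) hv'
    _ ≤ t * absForm (direction ξ) (direction η) v := by
        rw [mul_assoc]
        gcongr
        exact hle

theorem one_le_of_mem_markovSpectrum (h : t ∈ MarkovSpectrum) : 1 ≤ t := by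
  by_contra! hlt
  have ht := pos_of_mem_markovSpectrum h
  obtain ⟨ξ, η, -, hd, hform⟩ := exists_roots_of_mem_markovSpectrum h (half_lt_self ht)
  have hw := hform (fun i ↦ (![round η, 1] i : ℤ)) (mem_range_self _) fun h0 ↦ by
    simpa using congrFun h0 1
  have hη : |η - round η| ≤ 1 / 2 := abs_sub_round η
  have hξ : |ξ - round η| ≤ |ξ - η| + 1 / 2 := by linarith [abs_sub_le ξ η (round η)]
  have hle : |ξ - η| ≤ t * ((|ξ - η| + 1 / 2) * (1 / 2)) := hw.trans <| by
    rw [absForm, wedge_direction, wedge_direction]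
    simp only [Matrix.cons_val_zero, Matrix.cons_val_one, Int.cast_one, mul_one]
    gcongr
  nlinarith [abs_nonneg (ξ - η)]

theorem isClosed_markovSpectrum : IsClosed MarkovSpectrum := by
  refine IsSeqClosed.isClosed fun u t hu hut ↦ ?_
  choose ξ η hη hlow hform using fun n ↦ exists_roots_of_mem_markovSpectrum (hu n)
    (sub_lt_self (u n) (Nat.one_div_pos_of_nat (n := n)))
  have hupp (n : ℕ) : |ξ n - η n| ≤ u n := by
    refine (hform n _ horizontal_mem_integerLattice horizontal_ne_zero).trans_eq ?_
    rw [absForm, abs_wedge_direction_horizontal, abs_wedge_direction_horizontal, mul_one, mul_one]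
  have hlim : Tendsto (fun n ↦ |ξ n - η n|) atTop (𝓝 t) := by
    refine tendsto_of_tendsto_of_tendsto_of_le_of_le ?_ hut (fun n ↦ (hlow n).le) hupp
    simpa using hut.sub tendsto_one_div_add_atTop_nhds_zero_nat
  obtain ⟨ξ', η', φ, hd, -, hφ, hξ', hη'⟩ := exists_tendsto_subseq_of_abs_sub_tendsto hη hlim
  have ht : 0 < t := one_pos.trans_le
    (ge_of_tendsto' hut fun n ↦ one_le_of_mem_markovSpectrum (hu n))
  refine mem_markovSpectrum_of_abs_sub_eq ht hd fun w hw hw0 ↦ ?_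
  have hleft : Tendsto (fun n ↦ u (φ n) * absForm (direction (ξ (φ n))) (direction (η (φ n))) w)
      atTop (𝓝 (t * absForm (direction ξ') (direction η') w)) := by
    simp only [absForm, wedge_direction]
    exact (hut.comp hφ.tendsto_atTop).mul
      (((hξ'.mul_const _).sub_const _).abs.mul ((hη'.mul_const _).sub_const _).abs)
  have hle : t ≤ t * absForm (direction ξ') (direction η') w :=
    le_of_tendsto_of_tendsto' (hlim.comp hφ.tendsto_atTop) hleft fun n ↦ hform (φ n) w hw hw0
  exact (le_mul_iff_one_le_right ht).1 hle

end Markov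

section LimitPairs

variable {α ξ η ξ' η' ε s t τ : ℝ} {v : Fin 2 → ℝ}

/-- Integral changes of coordinates that contract the direction of slope `α` arbitrarily strongly
take it, together with the horizontal direction, `ε`-close to the slopes `ξ` and `η`. -/
def HasReturns (α ξ η ε : ℝ) : Prop :=
  ∀ δ > 0, ∃ M : SL(2, ℤ),
    IsAdapted ξ η ε (M • direction α) (M • horizontal) ∧ |(M • direction α) 1| < δ

theorem HasReturns.of_abs_sub_le (h : HasReturns α ξ η ε) (hξ : |ξ' - ξ| ≤ τ)
    (hη : |η' - η| ≤ τ) : HasReturns α ξ' η' (ε + τ) := fun δ hδ ↦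
  let ⟨M, H, hM⟩ := h δ hδ
  ⟨M, H.of_abs_sub_le hξ hη, hM⟩

theorem isEventualBound_of_lagrangeVal_eq (hα : Irrational α) (ht : 0 ≤ t)
    (h : lagrangeVal α = ENNReal.ofReal t) (hs : t < s) : IsEventualBound α s :=
  isEventualBound_of_lagrangeVal_lt hα
    (h.trans_lt ((ENNReal.ofReal_lt_ofReal_iff_of_nonneg ht).2 hs))

theorem IsEventualBound.exists_pos_forall_one_le (h : IsEventualBound α s) (hα : Irrational α) :
    ∃ δ > 0, ∀ (M : SL(2, ℤ)), ∀ v ∈ integerLattice, v ≠ 0 → |wedge (M • direction α) v| < δ →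
      1 ≤ s * absForm (M • direction α) (M • horizontal) v := by
  obtain ⟨N, hN⟩ := h
  obtain ⟨δ, hδ, hlarge⟩ := exists_pos_forall_lt_abs hα N
  refine ⟨δ, hδ, fun M v hv hv0 hvδ ↦ ?_⟩
  rw [← wedge_inv_smul] at hvδ
  rw [← absForm_inv_smul]
  have hv' := smul_mem_integerLattice M⁻¹ hv
  exact hN _ hv' (hlarge _ hv' (by rwa [Ne, smul_eq_zero_iff_eq]) hvδ).le

theorem IsEventualBound.exists_pos_forall_abs_sub_le (h : IsEventualBound α s)
    (hα : Irrational α) : ∃ δ > 0, ∀ (M : SL(2, ℤ)) (ξ η σ : ℝ),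
      IsAdapted ξ η σ (M • direction α) (M • horizontal) → |(M • direction α) 1| < δ →
        |ξ - η| - 2 * σ ≤ s := by
  obtain ⟨δ, hδ, hone⟩ := h.exists_pos_forall_one_le hα
  refine ⟨δ, hδ, fun M ξ η σ H hM ↦ ?_⟩
  have hval := hone M _ horizontal_mem_integerLattice horizontal_ne_zero
    (by rwa [abs_wedge_comm, wedge_horizontal])
  rw [absForm, abs_wedge_comm, wedge_horizontal, abs_wedge_comm, wedge_horizontal] at hval
  exact le_of_mul_le_mul_left ((H.mul_le_one.trans hval).trans_eq (mul_comm _ _))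
    (mul_pos H.left_pos H.right_pos)

theorem exists_isAdapted_of_not_isEventualBound (hα : Irrational α) (hs : 0 < s)
    (h : ¬ IsEventualBound α s) {δ : ℝ} (hδ : 0 < δ) :
    ∃ (M : SL(2, ℤ)) (ξ η : ℝ), η ∈ Icc (0 : ℝ) 1 ∧ s < |ξ - η| ∧
      IsAdapted ξ η 0 (M • direction α) (M • horizontal) ∧ |(M • direction α) 1| < δ := by
  simp only [IsEventualBound, not_exists, not_forall, not_le] at h
  obtain ⟨w, hw, hw1, hval⟩ := h (1 / (s * δ))
  have hpos : 0 < |w 1| := (by positivity : 0 < 1 / (s * δ)).trans_le hw1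
  obtain ⟨q, hq, hdist⟩ := exists_nat_distNearestInt_le α hw
  have hq0 : q ≠ 0 := by
    rintro rfl
    simp [hq] at hpos
  have hform : 0 < absForm (direction α) horizontal w := by
    rw [absForm_direction_horizontal]
    exact mul_pos hpos ((distNearestInt_pos hα hq0).trans_le hdist)
  obtain ⟨M, ξ, η, hη, hd, H, hM⟩ := exists_isAdapted_smul_of_mul_absForm_lt_one
    (by rw [abs_wedge_direction_horizontal]) hw hform hval
  refine ⟨M, ξ, η, hη, hd, H, hM.trans_lt ?_⟩
  rw [absForm_direction_horizontal, ← mul_assoc] at hval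
  refine lt_of_mul_lt_mul_left (hval.trans_le ?_) (by positivity : 0 ≤ s * |w 1|)
  rw [div_le_iff₀ (by positivity)] at hw1
  linarith

/-- The vectors of small value exist because `lagrangeVal α` is not below `t`; that it is not above
`t` bounds the distances of the resulting slopes. -/
theorem exists_seq_isAdapted_of_lagrangeVal_eq (hα : Irrational α) (ht : 1 ≤ t)
    (h : lagrangeVal α = ENNReal.ofReal t) :
    ∃ (M : ℕ → SL(2, ℤ)) (ξ η : ℕ → ℝ), (∀ n, η n ∈ Icc (0 : ℝ) 1) ∧
      (∀ n, IsAdapted (ξ n) (η n) 0 (M n • direction α) (M n • horizontal)) ∧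
      (∀ n : ℕ, |(M n • direction α) 1| < 1 / (n + 1)) ∧
      Tendsto (fun n ↦ |ξ n - η n|) atTop (𝓝 t) := by
  have hnot {s : ℝ} (hs : s < t) : ¬ IsEventualBound α s := fun hb ↦
    (lagrangeVal_le_of_isEventualBound hα hb).not_gt
      (h ▸ (ENNReal.ofReal_lt_ofReal_iff (by linarith)).2 hs)
  have hpos (n : ℕ) : 0 < t - 1 / 2 * (1 / (n + 1)) := by
    have : (1 : ℝ) / (n + 1) ≤ 1 := div_le_one_of_le₀ (by simp) (by positivity)
    linarith
  choose M ξ η hη hlow H hM using fun n : ℕ ↦ exists_isAdapted_of_not_isEventualBound hα (hpos n)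
    (hnot (sub_lt_self t (by positivity))) (Nat.one_div_pos_of_nat (n := n))
  have hzero := tendsto_one_div_add_atTop_nhds_zero_nat (𝕜 := ℝ)
  refine ⟨M, ξ, η, hη, H, hM, tendsto_order.2 ⟨fun s hs ↦ ?_, fun s hs ↦ ?_⟩⟩
  · have : Tendsto (fun n : ℕ ↦ t - 1 / 2 * (1 / ((n : ℝ) + 1))) atTop (𝓝 t) := by
      simpa only [mul_zero, sub_zero] using (hzero.const_mul (1 / 2)).const_sub t
    filter_upwards [this.eventually_const_lt hs] with n hn using hn.trans (hlow n)
  · obtain ⟨c, htc, hcs⟩ := exists_between hs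
    obtain ⟨δ, hδ, hle⟩ := (isEventualBound_of_lagrangeVal_eq hα (by linarith) h
      htc).exists_pos_forall_abs_sub_le hα
    filter_upwards [hzero.eventually_lt_const hδ] with n hn
    exact (by simpa using hle _ _ _ _ (H n) ((hM n).trans hn) : _ ≤ c).trans_lt hcs

theorem exists_hasReturns_of_lagrangeVal_eq (hα : Irrational α) (ht : 1 ≤ t)
    (h : lagrangeVal α = ENNReal.ofReal t) :
    ∃ ξ η : ℝ, |ξ - η| = t ∧ η ∈ Icc (0 : ℝ) 1 ∧ ∀ ε > 0, HasReturns α ξ η ε := by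
  obtain ⟨M, ξ, η, hη, H, hM, hlim⟩ := exists_seq_isAdapted_of_lagrangeVal_eq hα ht h
  obtain ⟨ξ', η', φ, hd, hη', hφ, hξlim, hηlim⟩ :=
    exists_tendsto_subseq_of_abs_sub_tendsto hη hlim
  have hzero := tendsto_one_div_add_atTop_nhds_zero_nat (𝕜 := ℝ)
  refine ⟨ξ', η', hd, hη', fun ε hε δ hδ ↦ ?_⟩
  obtain ⟨n, hδn, hξn, hηn⟩ := (((hzero.comp hφ.tendsto_atTop).eventually_lt_const hδ).and
    ((Metric.tendsto_nhds.1 hξlim ε hε).and (Metric.tendsto_nhds.1 hηlim ε hε))).exists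
  rw [dist_comm, Real.dist_eq] at hξn hηn
  exact ⟨M (φ n), zero_add ε ▸ (H (φ n)).of_abs_sub_le hξn.le hηn.le, (hM _).trans hδn⟩

theorem ofReal_abs_sub_le_lagrangeVal (hα : Irrational α)
    (h : ∀ ε > 0, HasReturns α ξ η ε) : ENNReal.ofReal |ξ - η| ≤ lagrangeVal α := by
  by_contra! hlt
  obtain ⟨s, hs0, hs, hsd⟩ := ENNReal.lt_iff_exists_real_btwn.1 hlt
  rw [ENNReal.ofReal_lt_ofReal_iff_of_nonneg hs0] at hsd
  obtain ⟨δ, hδ, hle⟩ :=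
    (isEventualBound_of_lagrangeVal_lt hα hs).exists_pos_forall_abs_sub_le hα
  obtain ⟨M, H, hM⟩ := h ((|ξ - η| - s) / 4) (by linarith) δ hδ
  linarith [hle M ξ η _ H hM]

theorem IsEventualBound.sub_le_mul_of_hasReturns (h : IsEventualBound α s) (hα : Irrational α)
    (hs : 0 ≤ s) (hret : HasReturns α ξ η ε) (hε : 0 ≤ ε) (hεd : 2 * ε ≤ |ξ - η|)
    (hv : v ∈ integerLattice) (hv0 : v ≠ 0) :
    |ξ - η| - 2 * ε ≤
      s * ((|wedge (direction ξ) v| + ε * |v 1|) * (|wedge (direction η) v| + ε * |v 1|)) := by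
  obtain ⟨δ, hδ, hone⟩ := h.exists_pos_forall_one_le hα
  obtain ⟨M, H, hM⟩ := hret (δ / (|wedge (direction ξ) v| + ε * |v 1| + 1)) (by positivity)
  have hlt : |wedge (M • direction α) v| < δ := by
    refine (abs_wedge_le_of_mem_cone H.left_mem).trans_lt ?_
    rw [lt_div_iff₀ (by positivity)] at hM
    exact hM.trans_le' (mul_le_mul_of_nonneg_left (le_add_of_nonneg_right zero_le_one)
      (abs_nonneg _))
  calc |ξ - η| - 2 * ε
      ≤ s * absForm (M • direction α) (M • horizontal) v * (|ξ - η| - 2 * ε) :=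
        le_mul_of_one_le_left (sub_nonneg.2 hεd) (hone M v hv hv0 hlt)
    _ ≤ s * ((|wedge (direction ξ) v| + ε * |v 1|) * (|wedge (direction η) v| + ε * |v 1|)) := by
        rw [mul_assoc]
        exact mul_le_mul_of_nonneg_left (H.absForm_mul_le hεd v) hs

theorem one_le_absForm_of_hasReturns (hα : Irrational α) (hd : 0 < |ξ - η|)
    (h : lagrangeVal α = ENNReal.ofReal |ξ - η|) (hret : ∀ ε > 0, HasReturns α ξ η ε)
    (hv : v ∈ integerLattice) (hv0 : v ≠ 0) : 1 ≤ absForm (direction ξ) (direction η) v := by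
  set x := |wedge (direction ξ) v|
  set y := |wedge (direction η) v|
  have hle : ∀ᶠ ε in 𝓝[>] (0 : ℝ),
      0 ≤ (|ξ - η| + ε) * ((x + ε * |v 1|) * (y + ε * |v 1|)) - (|ξ - η| - 2 * ε) := by
    filter_upwards [Ioc_mem_nhdsGT (half_pos hd)] with ε hε
    have hb := isEventualBound_of_lagrangeVal_eq hα hd.le h (lt_add_of_pos_right _ hε.1)
    exact sub_nonneg.2 (hb.sub_le_mul_of_hasReturns hα (add_nonneg hd.le hε.1.le) (hret ε hε.1)
      hε.1.le (by linarith [hε.2]) hv hv0)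
  have hcont : Continuous fun ε : ℝ ↦
      (|ξ - η| + ε) * ((x + ε * |v 1|) * (y + ε * |v 1|)) - (|ξ - η| - 2 * ε) := by fun_prop
  have hlim : |ξ - η| ≤ |ξ - η| * (x * y) := by
    simpa using ge_of_tendsto (hcont.continuousWithinAt.tendsto (s := Ioi 0) (x := 0)) hle
  exact (le_mul_iff_one_le_right hd).1 hlim

theorem lagrangeSpectrum_subset_markovSpectrum : LagrangeSpectrum ⊆ MarkovSpectrum := by
  intro t ht
  obtain ⟨ht1, α, hα, h⟩ := mem_lagrangeSpectrum_iff.1 ht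
  obtain ⟨ξ, η, rfl, -, hret⟩ := exists_hasReturns_of_lagrangeVal_eq hα ht1 h
  have hd : 0 < |ξ - η| := one_pos.trans_le ht1
  exact mem_markovSpectrum_of_abs_sub_eq hd rfl fun v hv hv0 ↦
    one_le_absForm_of_hasReturns hα hd h hret hv hv0

end LimitPairs

section Returns

variable {α ξ η τ : ℝ} {M h : SL(2, ℤ)} {a e v w : Fin 2 → ℝ}

theorem isHyperbolic_of_contract (hd : 1 ≤ |ξ - η|) (hτ : τ ≤ 1 / 64)
    (H : IsAdapted ξ η τ a e) (H' : IsAdapted ξ η τ (h • a) (h • e))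
    (hc : |(h • a) 1| ≤ τ / 2 * |a 1|) : IsHyperbolic ξ η τ h a e where
  source := H
  target := H'
  contract := by linarith [abs_nonneg ((h • a) 1)]
  expand := by
    have hpos : 0 < |ξ - η| - 2 * τ := by linarith
    have hratio : |ξ - η| + 2 * τ ≤ 2 * (|ξ - η| - 2 * τ) := by linarith
    refine le_of_mul_le_mul_left ?_ (mul_pos H.left_pos hpos)
    calc |a 1| * (|ξ - η| - 2 * τ) * |e 1| ≤ 1 := by linarith [H.mul_le_one]
      _ ≤ |(h • a) 1| * |(h • e) 1| * (|ξ - η| + 2 * τ) := H'.one_le_mul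
      _ ≤ |(h • a) 1| * |(h • e) 1| * (2 * (|ξ - η| - 2 * τ)) := by gcongr
      _ ≤ τ / 2 * |a 1| * |(h • e) 1| * (2 * (|ξ - η| - 2 * τ)) := by gcongr
      _ = _ := by ring

/-- A hyperbolic matrix with a frame in which the form takes values at least
`(|ξ - η| + τ)⁻¹` at the integer vectors close to the contracted direction. -/
structure IsReturn (ξ η τ : ℝ) (h : SL(2, ℤ)) (a e : Fin 2 → ℝ) : Prop
    extends IsHyperbolic ξ η τ h a e where
  one_le : ∀ w ∈ integerLattice, w ≠ 0 → w ∈ cone ξ (1 / 8) →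
    1 ≤ (|ξ - η| + τ) * absForm a e w

theorem le_two_mul_abs_inv_smul (hd : 1 ≤ |ξ - η|) (hM : M • horizontal ∈ cone η (1 / 8))
    (hvξ : v ∈ cone ξ (1 / 8)) (hv : 1 ≤ |v 1|) :
    |(M • horizontal) 1| ≤ 2 * |(M⁻¹ • v) 1| := by
  have hη := abs_sub_mul_le_of_mem_cone η hvξ
  rw [abs_sub_comm] at hη
  have hle : 1 / 2 ≤ |wedge (direction η) v| - 1 / 8 * |v 1| := by nlinarith
  rw [← wedge_horizontal (M⁻¹ • v), wedge_inv_smul]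
  calc |(M • horizontal) 1| = 2 * (|(M • horizontal) 1| * (1 / 2)) := by ring
    _ ≤ 2 * (|(M • horizontal) 1| * (|wedge (direction η) v| - 1 / 8 * |v 1|)) := by gcongr
    _ ≤ 2 * |wedge (M • horizontal) v| := by
        gcongr
        exact le_abs_wedge_of_mem_cone hM

theorem exists_isReturn (hd : 1 ≤ |ξ - η|) (hτ0 : 0 < τ) (hτ : τ ≤ 1 / 64)
    (hret : HasReturns α ξ η τ) (hb : IsEventualBound α (|ξ - η| + τ)) :
    ∃ h a e, IsReturn ξ η τ h a e := by
  obtain ⟨N, hN⟩ := hb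
  have hd' : 0 < |ξ - η| + 2 * τ := by positivity
  obtain ⟨M, H, hM⟩ := hret (1 / ((2 * |N| + 1) * (|ξ - η| + 2 * τ))) (by positivity)
  obtain ⟨M', H', hM'⟩ := hret (τ / 2 * |(M • direction α) 1|)
    (mul_pos (half_pos hτ0) H.left_pos)
  refine ⟨M' * M⁻¹, M • direction α, M • horizontal, isHyperbolic_of_contract hd hτ H ?_ ?_, ?_⟩
  · simpa only [mul_smul, inv_smul_smul] using H'
  · simpa only [mul_smul, inv_smul_smul] using hM'.le
  · intro w hw hw0 hwξ
    rw [← absForm_inv_smul]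
    refine hN _ (smul_mem_integerLattice _ hw) ?_
    have hlarge := le_two_mul_abs_inv_smul hd
      (cone_subset_cone (by linarith) H.right_mem) hwξ (one_le_abs_apply_one_of_mem_cone hw hw0 hwξ)
    rw [lt_div_iff₀ (by positivity)] at hM
    have : 2 * |N| + 1 ≤ |(M • horizontal) 1| := by
      refine le_of_mul_le_mul_left ?_ (mul_pos H.left_pos hd')
      linarith [H.one_le_mul]
    linarith [le_abs_self N]

theorem mul_le_abs_wedge_of_notMem_cone (hσ : 0 ≤ σ) (hσ' : 8 * σ < 1) (hv : v ∈ cone ξ σ)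
    (hw : w ∈ integerLattice) (hw0 : w ≠ 0) (hwξ : w ∉ cone ξ (1 / 8)) :
    |v 1| * (1 / 8 - σ) ≤ |wedge v w| := by
  refine (le_abs_wedge_of_mem_cone hv).trans' (mul_le_mul_of_nonneg_left ?_ (abs_nonneg _))
  rw [mem_cone, not_le] at hwξ
  rcases eq_or_ne (w 1) 0 with hw1 | hw1
  · rw [wedge_direction, hw1, mul_zero, zero_sub, abs_neg, abs_zero]
    linarith [one_le_abs_apply_zero hw hw0 hw1]
  · nlinarith [one_le_abs_of_mem_integerLattice hw hw1]

theorem exists_pos_pow_mul_le {d c : ℝ} (hc : d < c) :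
    ∃ σ > 0, 8 * σ < 1 ∧ (1 + 8 * σ) ^ 4 * (d + σ) ≤ (1 - 8 * σ) ^ 4 * c := by
  have hcont : Continuous fun σ : ℝ ↦ (1 - 8 * σ) ^ 4 * c - (1 + 8 * σ) ^ 4 * (d + σ) := by
    fun_prop
  have hpos := (hcont.continuousWithinAt.tendsto (s := Ioi 0) (x := 0)).eventually_const_lt
    (u := 0) (by simpa using hc)
  obtain ⟨σ, hσ, hσ0, hσ1⟩ := (hpos.and (Ioo_mem_nhdsGT (by norm_num : (0 : ℝ) < 1 / 8))).exists
  exact ⟨σ, hσ0, by linarith, by linarith⟩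

end Returns

/-- A sequence of returns with errors tending to zero. The vectors `left n` and `right n` are those
contracted and expanded by `mat n`; they need not match from one matrix to the next, except that
all of them point almost in the directions of slopes `ξ` and `η`. -/
structure ReturnSequence (ξ η : ℝ) where
  mat : ℕ → SL(2, ℤ)
  left : ℕ → Fin 2 → ℝ
  right : ℕ → Fin 2 → ℝ
  error : ℕ → ℝ
  one_le_abs_sub : 1 ≤ |ξ - η|
  error_le (n : ℕ) : error n ≤ 1 / 64
  tendsto_error : Tendsto error atTop (𝓝 0)
  isReturn (n : ℕ) : IsReturn ξ η (error n) (mat n) (left n) (right n)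

namespace ReturnSequence

variable {α ξ η σ : ℝ} (S : ReturnSequence ξ η) {M : SL(2, ℤ)} {b f v w : Fin 2 → ℝ} {m n : ℕ}

/-- The products of the first matrices of the sequence and an initial matrix `M`. -/
def orbit (M : SL(2, ℤ)) : ℕ → SL(2, ℤ)
  | 0 => M
  | n + 1 => S.mat n * orbit M n

/-- The orbit of `v` remains near the contracted direction. -/
def IsStable (M : SL(2, ℤ)) (v : Fin 2 → ℝ) : Prop := ∀ n, S.orbit M n • v ∈ cone ξ (1 / 8)

theorem orbit_succ_smul (M : SL(2, ℤ)) (n : ℕ) (v : Fin 2 → ℝ) :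
    S.orbit M (n + 1) • v = S.mat n • S.orbit M n • v := mul_smul _ _ _

theorem orbit_smul (M : SL(2, ℤ)) (n : ℕ) (v : Fin 2 → ℝ) :
    S.orbit M n • v = S.orbit 1 n • M • v := by
  induction n with
  | zero => rw [orbit, orbit, one_smul]
  | succ n ih => rw [orbit_succ_smul, orbit_succ_smul, ih]

variable {S}

theorem mem_cone_of_orbit_succ (hv : S.orbit M (n + 1) • v ∈ cone ξ (1 / 8)) :
    S.orbit M n • v ∈ cone ξ (2 * S.error n) ∧
      |(S.orbit M (n + 1) • v) 1| ≤ 2 * S.error n * |(S.orbit M n • v) 1| := by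
  rw [orbit_succ_smul] at hv ⊢
  exact (S.isReturn n).mem_cone_of_smul_mem_cone S.one_le_abs_sub (S.error_le n) hv

theorem mem_cone_of_le (hmn : m ≤ n) (hv : S.orbit M n • v ∈ cone ξ (1 / 8)) :
    S.orbit M m • v ∈ cone ξ (1 / 8) := by
  induction n, hmn using Nat.le_induction with
  | base => exact hv
  | succ n _ ih =>
    exact ih (cone_subset_cone (by linarith [S.error_le n]) (mem_cone_of_orbit_succ hv).1)

theorem IsStable.smul (c : ℝ) (hv : S.IsStable M v) : S.IsStable M (c • v) := fun n ↦ by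
  rw [smul_comm]
  exact smul_mem_cone c (hv n)

variable (S) in
theorem exists_orbit_smul_direction_mem (n : ℕ) :
    ∃ z, S.orbit 1 n • direction z ∈ cone ξ (1 / 8) := by
  set v := (S.orbit 1 n)⁻¹ • direction ξ
  have hv : S.orbit 1 n • v = direction ξ := smul_inv_smul _ _
  have hvn : S.orbit 1 n • v ∈ cone ξ (1 / 8) := by
    rw [hv, direction_mem_cone]
    simp
  have hv0 : v ≠ 0 := fun h0 ↦ by
    rw [h0, smul_zero] at hv
    simpa [direction] using congrFun hv 1
  have hv1 : v 1 ≠ 0 := by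
    have := mem_cone_of_le n.zero_le hvn
    rw [orbit, one_smul] at this
    exact apply_one_ne_zero_of_mem_cone this hv0
  refine ⟨v 0 / v 1, ?_⟩
  rw [direction_div hv1, smul_comm]
  exact smul_mem_cone _ hvn

variable (S) in
theorem exists_isStable_one_direction : ∃ z, |ξ - z| ≤ 1 / 8 ∧ S.IsStable 1 (direction z) := by
  let K (n : ℕ) : Set ℝ := {z | S.orbit 1 n • direction z ∈ cone ξ (1 / 8)}
  have hK0 : K 0 = Metric.closedBall ξ (1 / 8) := by
    ext z
    change (1 : SL(2, ℤ)) • direction z ∈ cone ξ (1 / 8) ↔ _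
    rw [one_smul, direction_mem_cone, Metric.mem_closedBall, dist_comm, Real.dist_eq]
  have hclosed (n : ℕ) : IsClosed (K n) := by
    refine (isClosed_cone ξ (1 / 8)).preimage ((continuous_smul _).comp (continuous_pi fun i ↦ ?_))
    fin_cases i
    exacts [continuous_id (X := ℝ), continuous_const]
  obtain ⟨z, hz⟩ := IsCompact.nonempty_iInter_of_sequence_nonempty_isCompact_isClosed K
    (fun n z hz ↦ mem_cone_of_le n.le_succ hz) S.exists_orbit_smul_direction_mem
    (hK0 ▸ isCompact_closedBall ξ (1 / 8)) hclosed
  rw [mem_iInter] at hz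
  exact ⟨z, direction_mem_cone.1 (by simpa [K, orbit] using hz 0), hz⟩

theorem exists_isStable_direction (hM : M • horizontal ∈ cone η (1 / 8)) :
    ∃ α, S.IsStable M (direction α) := by
  obtain ⟨z, hz, hstable⟩ := S.exists_isStable_one_direction
  set v := M⁻¹ • direction z
  have hv1 : v 1 ≠ 0 := by
    have hpos : 0 < |(M • horizontal) 1| :=
      abs_pos.2 (apply_one_ne_zero_of_mem_cone hM ((smul_ne_zero_iff_ne M).2 horizontal_ne_zero))
    have hle := le_two_mul_abs_inv_smul S.one_le_abs_sub hM (direction_mem_cone.2 hz)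
      (by simp [direction])
    exact abs_pos.1 (by linarith)
  refine ⟨v 0 / v 1, ?_⟩
  rw [direction_div hv1]
  refine IsStable.smul _ fun n ↦ ?_
  rw [orbit_smul, smul_inv_smul]
  exact hstable n

theorem IsStable.tendsto_apply_one (hv : S.IsStable M v) :
    Tendsto (fun n ↦ |(S.orbit M n • v) 1|) atTop (𝓝 0) := by
  have hle (n : ℕ) : |(S.orbit M n • v) 1| ≤ (1 / 2) ^ n * |(S.orbit M 0 • v) 1| := by
    refine le_geom (u := fun n ↦ |(S.orbit M n • v) 1|) (by norm_num) n fun k _ ↦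
      (mem_cone_of_orbit_succ (hv (k + 1))).2.trans ?_
    gcongr
    linarith [S.error_le k]
  refine squeeze_zero (fun _ ↦ abs_nonneg _) hle ?_
  simpa using (tendsto_pow_atTop_nhds_zero_of_lt_one (by norm_num) one_half_lt_one).mul_const
    |(S.orbit M 0 • v) 1|

theorem IsStable.eq_zero (hv : S.IsStable M v) (hvl : v ∈ integerLattice) : v = 0 := by
  by_contra hv0
  obtain ⟨n, hn⟩ := (hv.tendsto_apply_one.eventually_lt_const one_pos).exists
  exact hn.not_ge (one_le_abs_apply_one_of_mem_cone (smul_mem_integerLattice _ hvl)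
    (by rwa [Ne, smul_eq_zero_iff_eq]) (hv n))

theorem IsStable.irrational (hα : S.IsStable M (direction α)) : Irrational α := by
  rintro ⟨q, rfl⟩
  have hmem : (q.den : ℝ) • direction q ∈ integerLattice := by
    refine ⟨![q.num, q.den], funext fun i ↦ ?_⟩
    fin_cases i
    · simp only [direction, Pi.smul_apply]
      simpa using mod_cast (Rat.den_mul_eq_num q).symm
    · simp [direction]
  simpa [direction] using congrFun ((hα.smul q.den).eq_zero hmem) 1

theorem orbit_succ_smul_horizontal_mem (hM : M • horizontal ∈ cone η (1 / 8)) (n : ℕ) :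
    S.orbit M (n + 1) • horizontal ∈ cone η (2 * S.error n) := by
  have hstep {n : ℕ} (hn : S.orbit M n • horizontal ∈ cone η (1 / 8)) :
      S.orbit M (n + 1) • horizontal ∈ cone η (2 * S.error n) := by
    refine ((S.isReturn n).inv.mem_cone_of_smul_mem_cone
      (abs_sub_comm ξ η ▸ S.one_le_abs_sub) (S.error_le n) ?_).1
    rwa [orbit_succ_smul, inv_smul_smul]
  refine hstep ?_
  induction n with
  | zero => exact hM
  | succ n ih => exact cone_subset_cone (by linarith [S.error_le n]) (hstep ih)

theorem IsStable.eventually_isAdapted (hα : S.IsStable M (direction α))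
    (hM : M • horizontal ∈ cone η (1 / 8)) (hσ : 0 < σ) :
    ∀ᶠ n in atTop, IsAdapted ξ η σ (S.orbit M n • direction α) (S.orbit M n • horizontal) := by
  obtain ⟨K, hK⟩ := eventually_atTop.1 (S.tendsto_error.eventually_le_const (half_pos hσ))
  filter_upwards [eventually_gt_atTop K] with n hn
  obtain ⟨n, rfl⟩ := Nat.exists_eq_add_one_of_ne_zero (Nat.ne_zero_of_lt hn)
  refine ⟨?_, cone_subset_cone ?_ (mem_cone_of_orbit_succ (hα (n + 1 + 1))).1,
    cone_subset_cone ?_ (orbit_succ_smul_horizontal_mem hM n)⟩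
  · rw [wedge_smul_smul, abs_wedge_direction_horizontal]
  · linarith [hK (n + 1) hn.le]
  · linarith [hK n (Nat.lt_succ_iff.1 hn)]

theorem IsStable.hasReturns (hα : S.IsStable M (direction α))
    (hM : M • horizontal ∈ cone η (1 / 8)) (hσ : 0 < σ) : HasReturns α ξ η σ := fun _ hδ ↦
  let ⟨n, H, hn⟩ := ((hα.eventually_isAdapted hM hσ).and
    (hα.tendsto_apply_one.eventually_lt_const hδ)).exists
  ⟨S.orbit M n, H, hn⟩

theorem exists_exit {K : ℕ} (hw : w ∈ integerLattice) (hw0 : w ≠ 0)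
    (hK : S.orbit M K • w ∈ cone ξ (1 / 8)) :
    ∃ n ≥ K, S.orbit M n • w ∈ cone ξ (1 / 8) ∧ S.orbit M (n + 1) • w ∉ cone ξ (1 / 8) := by
  by_contra! hstay
  have hge (n : ℕ) (hn : K ≤ n) : S.orbit M n • w ∈ cone ξ (1 / 8) := by
    induction n, hn using Nat.le_induction with
    | base => exact hK
    | succ n hn ih => exact hstay n hn ih
  have hstable : S.IsStable M w := fun n ↦
    mem_cone_of_le (le_max_left n K) (hge _ (le_max_right n K))
  exact hw0 (hstable.eq_zero hw)

theorem pow_le_mul_absForm_of_exit (hσ : 0 ≤ σ) (hσ' : 8 * σ < 1) (hn : S.error n ≤ σ)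
    (G : IsAdapted ξ η σ (S.orbit M n • b) (S.orbit M n • f))
    (G' : IsAdapted ξ η σ (S.orbit M (n + 1) • b) (S.orbit M (n + 1) • f))
    (hw : w ∈ integerLattice) (hw0 : w ≠ 0) (hin : S.orbit M n • w ∈ cone ξ (1 / 8))
    (hout : S.orbit M (n + 1) • w ∉ cone ξ (1 / 8)) :
    (1 - 8 * σ) ^ 4 ≤ (1 + 8 * σ) ^ 4 * (|ξ - η| + σ) * absForm b f w := by
  simp only [orbit_succ_smul] at G' hout
  have R := S.isReturn n
  have hone := R.one_le _ (smul_mem_integerLattice _ hw) ((smul_ne_zero_iff_ne _).2 hw0) hin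
  have hle := IsAdapted.absForm_le S.one_le_abs_sub hσ hσ' (R.source.mono hn)
    (R.target.mono hn) G G' hin hout
  rw [absForm_smul_smul] at hle
  set x := absForm (S.left n) (S.right n) (S.orbit M n • w)
  have hx : 0 ≤ x := absForm_nonneg _ _ _
  calc (1 - 8 * σ) ^ 4 ≤ (1 - 8 * σ) ^ 4 * ((|ξ - η| + S.error n) * x) :=
        le_mul_of_one_le_right (by positivity) hone
    _ ≤ (1 - 8 * σ) ^ 4 * ((|ξ - η| + σ) * x) := by gcongr
    _ = (|ξ - η| + σ) * ((1 - 8 * σ) ^ 4 * x) := by ring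
    _ ≤ (|ξ - η| + σ) * ((1 + 8 * σ) ^ 4 * absForm b f w) := by gcongr
    _ = _ := by ring

theorem IsStable.isEventualBound (hα : S.IsStable M (direction α))
    (hM : M • horizontal ∈ cone η (1 / 8)) {c : ℝ} (hc : |ξ - η| < c) : IsEventualBound α c := by
  obtain ⟨σ, hσ, hσ', hσc⟩ := exists_pos_pow_mul_le hc
  obtain ⟨K, hK⟩ := eventually_atTop.1
    ((hα.eventually_isAdapted hM hσ).and (S.tendsto_error.eventually_le_const hσ))
  have hc0 : 0 < c := (abs_nonneg _).trans_lt hc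
  have hδ : 0 < |(S.orbit M K • direction α) 1| * (1 / 8 - σ) :=
    mul_pos (hK K le_rfl).1.left_pos (by linarith)
  set δ := |(S.orbit M K • direction α) 1| * (1 / 8 - σ)
  refine ⟨1 / (c * δ), fun w hw hw1 ↦ ?_⟩
  have hw0 : w ≠ 0 := by
    rintro rfl
    have : 0 < 1 / (c * δ) := by positivity
    exact hw1.not_gt (by simpa using this)
  by_cases hin : S.orbit M K • w ∈ cone ξ (1 / 8)
  · obtain ⟨n, hn, hin, hout⟩ := exists_exit hw hw0 hin
    have hle := pow_le_mul_absForm_of_exit hσ.le hσ' (hK n hn).2 (hK n hn).1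
      (hK (n + 1) (by omega)).1 hw hw0 hin hout
    have hpos : 0 < (1 - 8 * σ) ^ 4 := pow_pos (by linarith) 4
    refine le_of_mul_le_mul_left ?_ hpos
    rw [mul_one, ← mul_assoc]
    exact hle.trans (mul_le_mul_of_nonneg_right hσc (absForm_nonneg _ _ _))
  · have hle := mul_le_abs_wedge_of_notMem_cone hσ.le hσ' (hK K le_rfl).1.left_mem
      (smul_mem_integerLattice _ hw) ((smul_ne_zero_iff_ne _).2 hw0) hin
    rw [wedge_smul_smul] at hle
    rw [absForm_direction_horizontal]
    rw [div_le_iff₀ (by positivity)] at hw1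
    calc 1 ≤ |w 1| * (c * δ) := hw1
      _ ≤ |w 1| * (c * |wedge (direction α) w|) := by gcongr
      _ = _ := by ring

theorem abs_sub_mem_lagrangeSpectrum (S : ReturnSequence ξ η)
    (hM : M • horizontal ∈ cone η (1 / 8)) : |ξ - η| ∈ LagrangeSpectrum := by
  obtain ⟨α, hα⟩ := S.exists_isStable_direction hM
  refine mem_lagrangeSpectrum_iff.2 ⟨S.one_le_abs_sub, α, hα.irrational, le_antisymm ?_
    (ofReal_abs_sub_le_lagrangeVal hα.irrational fun ε hε ↦ hα.hasReturns hM hε)⟩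
  refine ENNReal.le_of_forall_pos_le_add fun ε hε _ ↦ ?_
  have hle := lagrangeVal_le_of_isEventualBound hα.irrational
    (hα.isEventualBound hM (lt_add_of_pos_right |ξ - η| (NNReal.coe_pos.2 hε)))
  rwa [ENNReal.ofReal_add (abs_nonneg _) ε.coe_nonneg, ENNReal.ofReal_coe_nnreal] at hle

end ReturnSequence

theorem abs_sub_mem_lagrangeSpectrum_of_hasReturns {ξ η : ℝ} (hd : 1 ≤ |ξ - η|)
    (h : ∀ ε > 0, ∃ α, IsEventualBound α (|ξ - η| + ε) ∧ HasReturns α ξ η ε) :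
    |ξ - η| ∈ LagrangeSpectrum := by
  have herr (n : ℕ) : (0 : ℝ) < 1 / 64 * (1 / (n + 1)) := by positivity
  have herr' (n : ℕ) : (1 : ℝ) / 64 * (1 / (n + 1)) ≤ 1 / 64 :=
    mul_le_of_le_one_right (by norm_num) (div_le_one_of_le₀ (by simp) (by positivity))
  choose α hb hret using fun n : ℕ ↦ h _ (herr n)
  choose g a e hg using fun n ↦ exists_isReturn hd (herr n) (herr' n) (hret n) (hb n)
  obtain ⟨M, H, -⟩ := hret 0 1 one_pos
  exact ReturnSequence.abs_sub_mem_lagrangeSpectrum (M := M)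
    { mat := g, left := a, right := e, error := fun n ↦ 1 / 64 * (1 / (n + 1))
      one_le_abs_sub := hd
      error_le := herr'
      tendsto_error := by
        simpa only [mul_zero] using
          tendsto_one_div_add_atTop_nhds_zero_nat.const_mul (1 / 64 : ℝ)
      isReturn := hg }
    (cone_subset_cone (by norm_num) H.right_mem)

theorem isClosed_lagrangeSpectrum : IsClosed LagrangeSpectrum := by
  refine IsSeqClosed.isClosed fun u t hu hut ↦ ?_
  choose ht α hα hval using fun n ↦ mem_lagrangeSpectrum_iff.1 (hu n)
  choose ξ η hd hη hret using fun n ↦ exists_hasReturns_of_lagrangeVal_eq (hα n) (ht n) (hval n)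
  have hlim : Tendsto (fun n ↦ |ξ n - η n|) atTop (𝓝 t) := by simpa only [hd] using hut
  obtain ⟨ξ', η', φ, rfl, -, hφ, hξ', hη'⟩ := exists_tendsto_subseq_of_abs_sub_tendsto hη hlim
  refine abs_sub_mem_lagrangeSpectrum_of_hasReturns (ge_of_tendsto' hut ht) fun ε hε ↦ ?_
  obtain ⟨n, hn, hξn, hηn⟩ :=
    (((hut.comp hφ.tendsto_atTop).eventually_lt_const (lt_add_of_pos_right _ hε)).and
      ((Metric.tendsto_nhds.1 hξ' _ (half_pos hε)).and
        (Metric.tendsto_nhds.1 hη' _ (half_pos hε)))).exists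
  rw [dist_comm, Real.dist_eq] at hξn hηn
  refine ⟨α (φ n), isEventualBound_of_lagrangeVal_eq (hα _) (by linarith [ht (φ n)]) (hval _) hn,
    ?_⟩
  exact add_halves ε ▸ (hret (φ n) _ (half_pos hε)).of_abs_sub_le hξn.le hηn.le

end MarkovLagrange

/-- The Lagrange spectrum is contained in the Markov spectrum, and both are closed subsets
of the real line. -/
theorem lagrange_subset_markov_and_closed :
    LagrangeSpectrum ⊆ MarkovSpectrum ∧
    IsClosed LagrangeSpectrum ∧ IsClosed MarkovSpectrum :=
  ⟨MarkovLagrange.lagrangeSpectrum_subset_markovSpectrum,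
    MarkovLagrange.isClosed_lagrangeSpectrum, MarkovLagrange.isClosed_markovSpectrum⟩
end

section
/- (Perron) The numbers √12, √13 and (65 + 9√3)/22 belong to the Lagrange spectrum L, while M ∩ (√12, √13) = ∅ and M ∩ (√13, (65 + 9√3)/22) = ∅; in particular the open intervals (√12, √13) and (√13, (65 + 9√3)/22) are gaps of both spectra. -/
open scoped ENNReal

/-!
A form with finite Markov value factors as a multiple of `(p - q x) (p + q y)`, and reduction makes
`x > 1` and `0 < y < 1`. Expanding `x` and `y` as continued fractions gives a two-sided sequence of
partial quotients; every shift `(x', y')` of the expansion is an equivalent form, so `x' + y'` is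
at most the Markov value, and the Markov value is the supremum of these sums.

Suppose these sums stay below `(65 + 9 √3) / 22 < 4`. Then no partial quotient exceeds `3`. A `3`
next to a `1` makes a sum too large; without such neighbours, fractional parts with first quotient
at most `2` are at least `(√3 - 1) / 2`, and this makes the sum at a `3` next to a `2` too large.
So either all partial quotients are `3` and the Markov value is `√13`, or none exceeds `2` and all
sums are at most `√12`.

For Lagrange values the supremum becomes an upper limit. The cluster points of the pairs `(x, y)`
are again closed under the shift, which gives `L ⊆ M`. The three values are attained by the
partial quotients `1, 2, 1, 2, …`, by `3, 3, 3, …`, and by blocks `3, 3, 2, 1, 2, 1, …, 2` of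
increasing length.
-/

section

open Filter Topology

/-! ### Forms in terms of their roots -/

/-- The value at `v` of the indefinite form `(p - q x) (p + q y)` of discriminant `(x + y) ^ 2`,
normalised to discriminant `1`. The second root is `-y`, so that reduced forms have `x > 1` and
`0 < y < 1`. -/
noncomputable def normVal (x y : ℝ) (v : ℤ × ℤ) : ℝ :=
  |(v.1 - v.2 * x) * (v.1 + v.2 * y)| / |x + y|

/-- The Markov value `m(h)` of the form with roots `x` and `-y`. -/
noncomputable def pairMarkovVal (x y : ℝ) : ℝ≥0∞ :=
  ⨆ (v : ℤ × ℤ) (_ : v ≠ 0), (ENNReal.ofReal (normVal x y v))⁻¹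

/-- The unimodular substitution `(p, q) ↦ (p + n q, q)`. -/
def shear (n : ℤ) : ℤ × ℤ ≃+ ℤ × ℤ where
  toFun v := (v.1 + n * v.2, v.2)
  invFun v := (v.1 - n * v.2, v.2)
  left_inv v := by simp
  right_inv v := by simp
  map_add' v w := by ext <;> simp; ring

section NormVal

variable (x y : ℝ) (v : ℤ × ℤ)

theorem normVal_neg : normVal x y (-v) = normVal x y v := by
  unfold normVal
  congr 2
  push_cast [Prod.fst_neg, Prod.snd_neg]
  ring

theorem normVal_neg_neg : normVal (-y) (-x) v = normVal x y v := by
  unfold normVal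
  rw [← abs_neg (x + y)]
  congr 2 <;> ring

theorem normVal_symm : normVal y x (v.1, -v.2) = normVal x y v := by
  unfold normVal
  rw [add_comm y]
  congr 2
  push_cast
  ring

theorem normVal_shear (n : ℤ) : normVal (x + n) (y - n) (shear n v) = normVal x y v := by
  unfold normVal shear
  congr 2
  · push_cast [AddEquiv.coe_mk, Equiv.coe_fn_mk]
    ring
  · ring

theorem normVal_smul_one_zero (k : ℤ) : normVal x y (k, 0) = k ^ 2 / |x + y| := by
  simp [normVal, abs_mul_abs_self, sq]

variable {x y}

theorem normVal_inv (hx : x ≠ 0) (hy : y ≠ 0) : normVal x⁻¹ y⁻¹ v.swap = normVal x y v := by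
  have hxy : 0 < |x * y| := abs_pos.2 (mul_ne_zero hx hy)
  unfold normVal
  rw [← mul_div_mul_left _ |x⁻¹ + y⁻¹| hxy.ne', ← abs_mul, ← abs_mul, ← abs_neg (x * y * (_ * _))]
  congr 2
  · rw [Prod.fst_swap, Prod.snd_swap]
    field_simp
    ring
  · field_simp
    ring

theorem normVal_swap (hx : x ≠ 0) (hy : y ≠ 0) :
    normVal y⁻¹ x⁻¹ (-v.2, v.1) = normVal x y v := by
  rw [← normVal_neg, ← normVal_inv v hx hy, ← normVal_symm x⁻¹]
  simp

end NormVal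

theorem pairMarkovVal_congr {x y x' y' : ℝ} (e : ℤ × ℤ ≃+ ℤ × ℤ)
    (h : ∀ v, normVal x' y' (e v) = normVal x y v) : pairMarkovVal x' y' = pairMarkovVal x y :=
  (e.toEquiv.iSup_congr fun v => by simp [h]).symm

section PairMarkovVal

variable {x y : ℝ}

theorem pairMarkovVal_neg_neg : pairMarkovVal (-y) (-x) = pairMarkovVal x y :=
  pairMarkovVal_congr (.refl _) (normVal_neg_neg x y)

theorem pairMarkovVal_add_sub (n : ℤ) : pairMarkovVal (x + n) (y - n) = pairMarkovVal x y :=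
  pairMarkovVal_congr (shear n) fun v => normVal_shear x y v n

theorem pairMarkovVal_inv (hx : x ≠ 0) (hy : y ≠ 0) :
    pairMarkovVal x⁻¹ y⁻¹ = pairMarkovVal x y :=
  pairMarkovVal_congr .prodComm fun v => normVal_inv v hx hy

theorem pairMarkovVal_symm : pairMarkovVal y x = pairMarkovVal x y :=
  pairMarkovVal_congr (.prodCongr (.refl ℤ) (.neg ℤ)) (normVal_symm x y)

theorem inv_normVal_le_pairMarkovVal {v : ℤ × ℤ} (hv : v ≠ 0) :
    (ENNReal.ofReal (normVal x y v))⁻¹ ≤ pairMarkovVal x y :=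
  le_iSup₂_of_le v hv le_rfl

theorem normVal_pos {v : ℤ × ℤ} (h : pairMarkovVal x y ≠ ⊤) (hv : v ≠ 0) : 0 < normVal x y v := by
  by_contra! h0
  refine h (top_unique ((inv_normVal_le_pairMarkovVal hv).trans' ?_))
  rw [ENNReal.ofReal_of_nonpos h0, ENNReal.inv_zero]

theorem abs_add_le_toReal_pairMarkovVal (h : pairMarkovVal x y ≠ ⊤) :
    |x + y| ≤ (pairMarkovVal x y).toReal := by
  have hne : ((1, 0) : ℤ × ℤ) ≠ 0 := by decide
  have hpos := normVal_pos h hne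
  have := inv_normVal_le_pairMarkovVal (x := x) (y := y) hne
  rw [← ENNReal.ofReal_inv_of_pos hpos] at this
  simpa [normVal_smul_one_zero x y 1] using ENNReal.ofReal_le_iff_le_toReal h |>.1 this

end PairMarkovVal

section MarkovVal

theorem markovVal_eq_pairMarkovVal {a x y : ℝ} (ha : a ≠ 0) (hxy : x + y ≠ 0) :
    markovVal a (a * (y - x)) (-(a * x * y)) = pairMarkovVal x y := by
  have hdisc : (a * (y - x)) ^ 2 - 4 * a * -(a * x * y) = (a * (x + y)) ^ 2 := by ring
  have hpos : 0 < |a * (x + y)| := abs_pos.2 (mul_ne_zero ha hxy)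
  refine biSup_congr fun v _ => ?_
  have hform : a * (v.1 : ℝ) ^ 2 + a * (y - x) * v.1 * v.2 + -(a * x * y) * (v.2 : ℝ) ^ 2 =
      a * ((v.1 - v.2 * x) * (v.1 + v.2 * y)) := by ring
  rw [hdisc, hform, Real.sqrt_sq_eq_abs, ← inv_inv (ENNReal.ofReal _ / _),
    ENNReal.inv_div (.inr ENNReal.ofReal_ne_top) (.inr (ENNReal.ofReal_pos.2 hpos).ne'),
    ← ENNReal.ofReal_div_of_pos hpos, abs_mul a, abs_mul a,
    mul_div_mul_left _ _ (abs_ne_zero.2 ha), normVal]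

theorem coeff_ne_zero_of_markovVal_ne_top {a b c : ℝ} (hdisc : 0 < b ^ 2 - 4 * a * c)
    (h : markovVal a b c ≠ ⊤) : a ≠ 0 := by
  rintro rfl
  refine h (top_unique (le_iSup₂_of_le ((1, 0) : ℤ × ℤ) (by decide) ?_))
  simpa using (ENNReal.div_zero (ENNReal.ofReal_pos.2 (Real.sqrt_pos.2 hdisc)).ne').ge

theorem mem_markovSpectrum_iff {t : ℝ} :
    t ∈ MarkovSpectrum ↔
      ∃ x y, x + y ≠ 0 ∧ pairMarkovVal x y ≠ ⊤ ∧ (pairMarkovVal x y).toReal = t := by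
  constructor
  · rintro ⟨a, b, c, hdisc, htop, ht⟩
    have ha := coeff_ne_zero_of_markovVal_ne_top hdisc htop
    set d := √(b ^ 2 - 4 * a * c)
    have hd : 0 < d := Real.sqrt_pos.2 hdisc
    have hsq : d ^ 2 = b ^ 2 - 4 * a * c := Real.sq_sqrt hdisc.le
    have hsum : (d - b) / (2 * a) + (d + b) / (2 * a) = d / a := by field_simp; ring
    have hne := hsum.trans_ne (div_ne_zero hd.ne' ha)
    have hval := markovVal_eq_pairMarkovVal ha hne
    rw [show a * ((d + b) / (2 * a) - (d - b) / (2 * a)) = b by field_simp; ring,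
      show -(a * ((d - b) / (2 * a)) * ((d + b) / (2 * a))) = c by
        field_simp
        linear_combination -hsq] at hval
    exact ⟨_, _, hne, hval ▸ htop, hval ▸ ht⟩
  · rintro ⟨x, y, hxy, htop, ht⟩
    have hval := markovVal_eq_pairMarkovVal one_ne_zero hxy
    refine ⟨_, _, _, ?_, hval ▸ htop, hval ▸ ht⟩
    nlinarith [sq_pos_of_ne_zero hxy]

end MarkovVal

/-! ### Reduction -/

section Reduction

theorem exists_int_abs_sq_sub_le {δ : ℝ} (θ : ℝ) (hδ : δ ^ 2 ≤ 1) :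
    ∃ p : ℤ, |(p - θ) ^ 2 - δ ^ 2| ≤ 3 / 4 := by
  have hfloor := Int.floor_le θ
  have hfloor' := Int.lt_floor_add_one θ
  rcases le_or_gt (δ ^ 2) (3 / 4) with hδ' | hδ'
  · obtain ⟨hl, hu⟩ := abs_le.1 (abs_sub_round θ)
    exact ⟨round θ, abs_le.2 ⟨by nlinarith, by nlinarith⟩⟩
  · rcases le_or_gt θ (⌊θ⌋ + 1 / 2) with hθ | hθ
    · exact ⟨⌊θ⌋ + 1, abs_le.2 (by push_cast; constructor <;> nlinarith)⟩
    · exact ⟨⌊θ⌋, abs_le.2 ⟨by nlinarith, by nlinarith⟩⟩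

variable {x y : ℝ}

theorem exists_abs_add_ge (h : pairMarkovVal x y ≠ ⊤) (hle : |x + y| ≤ 2) :
    ∃ x' y', pairMarkovVal x' y' = pairMarkovVal x y ∧ 4 / 3 * |x + y| ≤ |x' + y'| := by
  obtain ⟨p, hp⟩ := exists_int_abs_sq_sub_le ((x - y) / 2)
    ((sq_le_one_iff_abs_le_one ((x + y) / 2)).2 (by rw [abs_div, abs_two]; linarith))
  have hne : (x - p) * (y + p) ≠ 0 := by
    intro h0
    refine (normVal_pos h (v := (p, 1)) (by simp [Prod.ext_iff])).ne' ?_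
    rw [normVal, show ((p : ℝ) - (1 : ℤ) * x) * (p + (1 : ℤ) * y) = -((x - p) * (y + p)) by
      push_cast; ring, h0, neg_zero, abs_zero, zero_div]
  have hprod : |(x - p) * (y + p)| ≤ 3 / 4 := by
    rw [← abs_neg]
    exact (congrArg _ (by ring)).trans_le hp
  have hx := left_ne_zero_of_mul hne
  have hy := right_ne_zero_of_mul hne
  refine ⟨(x - p)⁻¹, (y + p)⁻¹, ?_, ?_⟩
  · rw [pairMarkovVal_inv hx hy]
    simpa [sub_eq_add_neg] using pairMarkovVal_add_sub (x := x) (y := y) (-p)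
  · rw [show (x - p)⁻¹ + (y + p)⁻¹ = (x + y) / ((x - p) * (y + p)) by field_simp; ring, abs_div,
      le_div_iff₀ (abs_pos.2 hne)]
    nlinarith [abs_nonneg (x + y)]

theorem exists_two_lt_abs_add (hxy : x + y ≠ 0) (h : pairMarkovVal x y ≠ ⊤) :
    ∃ x' y', pairMarkovVal x' y' = pairMarkovVal x y ∧ 2 < |x' + y'| := by
  set A : Set ℝ := {s | ∃ x' y', pairMarkovVal x' y' = pairMarkovVal x y ∧ |x' + y'| = s}
  have hA : BddAbove A := by
    refine ⟨(pairMarkovVal x y).toReal, ?_⟩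
    rintro _ ⟨x', y', hval, rfl⟩
    exact hval ▸ abs_add_le_toReal_pairMarkovVal (hval ▸ h)
  have hxyA : |x + y| ∈ A := ⟨x, y, rfl, rfl⟩
  have hpos : 0 < sSup A := (abs_pos.2 hxy).trans_le (le_csSup hA hxyA)
  obtain ⟨_, ⟨x', y', hval, rfl⟩, hlt⟩ :=
    exists_lt_of_lt_csSup ⟨_, hxyA⟩ (show 3 / 4 * sSup A < sSup A by linarith)
  refine ⟨x', y', hval, lt_of_not_ge fun hle => ?_⟩
  obtain ⟨x'', y'', hval', hge⟩ := exists_abs_add_ge (hval ▸ h) hle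
  linarith [le_csSup hA ⟨x'', y'', hval'.trans hval, rfl⟩]

theorem exists_reduced (hxy : x + y ≠ 0) (h : pairMarkovVal x y ≠ ⊤) :
    ∃ x' y', 1 < x' ∧ 0 < y' ∧ y' < 1 ∧ pairMarkovVal x' y' = pairMarkovVal x y := by
  obtain ⟨x₁, y₁, hval, hlt⟩ : ∃ x₁ y₁, pairMarkovVal x₁ y₁ = pairMarkovVal x y ∧ 2 < x₁ + y₁ := by
    obtain ⟨x₁, y₁, hval, hlt⟩ := exists_two_lt_abs_add hxy h
    rcases lt_abs.1 hlt with hlt | hlt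
    · exact ⟨x₁, y₁, hval, hlt⟩
    · exact ⟨-y₁, -x₁, pairMarkovVal_neg_neg.trans hval, by linarith⟩
  have hval' := (pairMarkovVal_add_sub (x := x₁) (y := y₁) ⌊y₁⌋).trans hval
  have hne : y₁ - ⌊y₁⌋ ≠ 0 := by
    intro h0
    refine (normVal_pos (hval'.trans_ne h) (v := (0, 1)) (by decide)).ne' ?_
    rw [normVal, h0]
    simp
  have hfloor := Int.floor_le y₁
  have hfloor' := Int.lt_floor_add_one y₁
  exact ⟨_, _, by linarith, lt_of_le_of_ne (by linarith) hne.symm, by linarith, hval'⟩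

end Reduction

/-! ### Chains of complete quotients -/

/-- A continued fraction expansion with partial quotients `a n` and complete quotients `x n`,
together with the backward quotients `y n = [0; a (n - 1), …, a 0 + y 0]`. -/
structure IsQuotientChain (a : ℕ → ℤ) (x y : ℕ → ℝ) : Prop where
  one_lt : ∀ n, 1 < x n
  nonneg : ∀ n, 0 ≤ y n
  eq_add : ∀ n, x n = a n + (x (n + 1))⁻¹
  succ_eq : ∀ n, y (n + 1) = (a n + y n)⁻¹

/-- The unimodular substitution `(p, q) ↦ (n p + q, p)` of one step of the Euclidean algorithm. -/
def euclidStep (n : ℤ) : ℤ × ℤ ≃+ ℤ × ℤ :=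
  AddEquiv.prodComm.trans (shear n)

/-- The composite of the first `n` Euclidean steps; its columns `euclidLift a n (1, 0)` and
`euclidLift a n (0, 1)` are the numerator-denominator pairs of two consecutive convergents. -/
def euclidLift (a : ℕ → ℤ) : ℕ → (ℤ × ℤ ≃+ ℤ × ℤ)
  | 0 => .refl _
  | n + 1 => (euclidStep (a n)).trans (euclidLift a n)

section EuclidStep

theorem one_le_of_one_lt_add_inv {n : ℤ} {w : ℝ} (hw : 1 < w) (h : 1 < n + w⁻¹) : 1 ≤ n := by
  have : (0 : ℝ) < n := by linarith [inv_lt_one_of_one_lt₀ hw]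
  exact_mod_cast this

theorem euclidStep_apply (n p q : ℤ) : euclidStep n (p, q) = (q + n * p, p) := rfl

theorem normVal_euclidStep {x y : ℝ} {n : ℤ} (hx : x ≠ 0) (hy : n + y ≠ 0) (v : ℤ × ℤ) :
    normVal (n + x⁻¹) y (euclidStep n v) = normVal x (n + y)⁻¹ v := by
  have := normVal_shear x⁻¹ (n + y) v.swap n
  rw [add_comm x⁻¹, add_sub_cancel_left] at this
  rw [← normVal_inv v hx (inv_ne_zero hy), inv_inv, ← this]
  rfl

theorem euclidLift_succ_apply (a : ℕ → ℤ) (n : ℕ) (p q : ℤ) :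
    euclidLift a (n + 1) (p, q) = euclidLift a n (q + a n * p, p) := rfl

theorem fst_euclidLift_mul (a : ℕ → ℤ) (n : ℕ) (k : ℤ) :
    (euclidLift a n (k, 0)).1 = k * (euclidLift a n (1, 0)).1 := by
  rw [← smul_eq_mul k, ← Prod.smul_fst, ← map_zsmul]
  simp

variable {a : ℕ → ℤ} (ha : ∀ n, 1 ≤ a n)
include ha

theorem add_le_fst_euclidLift (n : ℕ) {p q : ℤ} (hp : 1 ≤ p) (hq : 1 ≤ q) :
    n + p ≤ (euclidLift a n (p, q)).1 := by
  induction n generalizing p q with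
  | zero => simp [euclidLift]
  | succ n ih =>
    have := ih (show 1 ≤ q + a n * p by nlinarith [ha n]) hp
    rw [euclidLift_succ_apply]
    push_cast
    nlinarith [ha n]

theorem le_fst_euclidLift (n : ℕ) : n ≤ (euclidLift a n (1, 0)).1 := by
  cases n with
  | zero => simp [euclidLift]
  | succ n =>
    rw [euclidLift_succ_apply, zero_add, mul_one]
    push_cast
    linarith [add_le_fst_euclidLift ha n (ha n) le_rfl, ha n]

end EuclidStep

theorem half_le_normVal {x y : ℝ} {p q : ℤ} (hxy : 0 < x + y) (hq : 1 ≤ q)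
    (hx : 1 ≤ |p - q * x|) (hy : 1 ≤ p + q * y) : 1 / 2 ≤ normVal x y (p, q) := by
  have hq' : (1 : ℝ) ≤ q := by exact_mod_cast hq
  rw [normVal, abs_mul, abs_of_pos hxy, abs_of_pos (zero_lt_one.trans_le hy), le_div_iff₀ hxy]
  nlinarith [neg_abs_le (p - q * x), le_abs_self (p - q * x)]

namespace IsQuotientChain

variable {a : ℕ → ℤ} {x y : ℕ → ℝ} (h : IsQuotientChain a x y)
include h

theorem one_le_digit (n : ℕ) : 1 ≤ a n :=
  one_le_of_one_lt_add_inv (h.one_lt (n + 1)) (h.eq_add n ▸ h.one_lt n)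

theorem digit_add_pos (n : ℕ) : 0 < a n + y n :=
  add_pos_of_pos_of_nonneg (by exact_mod_cast h.one_le_digit n) (h.nonneg n)

theorem add_pos (n : ℕ) : 0 < x n + y n := by
  linarith [h.one_lt n, h.nonneg n]

theorem normVal_euclidLift (n : ℕ) (v : ℤ × ℤ) :
    normVal (x 0) (y 0) (euclidLift a n v) = normVal (x n) (y n) v := by
  induction n generalizing v with
  | zero => rfl
  | succ n ih =>
    rw [h.succ_eq, ← normVal_euclidStep (zero_lt_one.trans (h.one_lt _)).ne'
      (h.digit_add_pos n).ne', ← h.eq_add]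
    exact ih _

/-- Running the Euclidean algorithm on `v` along the chain, either it stops at a multiple of a
convergent, or it meets a linear factor of absolute value at least `1`. -/
theorem half_le_normVal_or_euclidLift_eq (n : ℕ) {p q : ℤ} (hp : 0 < p) (hq : 0 ≤ q) :
    1 / 2 ≤ normVal (x n) (y n) (p, q) ∨
      ∃ m k, 1 ≤ k ∧ euclidLift a n (p, q) = euclidLift a m (k, 0) := by
  induction hs : (p + q).toNat using Nat.strong_induction_on generalizing n p q with
  | _ s ih =>
  obtain rfl | hq := hq.eq_or_lt
  · exact .inr ⟨n, p, hp, rfl⟩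
  have hq' : (1 : ℝ) ≤ q := by exact_mod_cast hq
  rcases le_or_gt 1 |p - q * x n| with hle | hlt
  · have hp' : (1 : ℝ) ≤ p := by exact_mod_cast hp
    exact .inl (half_le_normVal (h.add_pos n) hq hle (by nlinarith [h.nonneg n]))
  have hr : 0 ≤ p - a n * q := by
    have hx := inv_pos.2 (zero_lt_one.trans (h.one_lt (n + 1)))
    have : ((-1 : ℤ) : ℝ) < (p - a n * q : ℤ) := by
      push_cast
      nlinarith [neg_abs_le (p - q * x n), h.eq_add n]
    have := Int.cast_lt.1 this
    omega
  have hpq : (p, q) = euclidStep (a n) (q, p - a n * q) := by simp [euclidStep_apply]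
  have hdecr : (q + (p - a n * q)).toNat < s := by
    have : 0 < a n * q := mul_pos (h.one_le_digit n) hq
    omega
  rw [hpq, h.eq_add n, normVal_euclidStep (zero_lt_one.trans (h.one_lt _)).ne'
    (h.digit_add_pos n).ne', ← h.succ_eq]
  exact ih _ hdecr (n + 1) hq hr rfl

theorem half_le_normVal_or_exists {v : ℤ × ℤ} (hv₁ : 0 < v.1) (hv₂ : 0 ≤ v.2) :
    1 / 2 ≤ normVal (x 0) (y 0) v ∨ ∃ n k, 1 ≤ k ∧ v = euclidLift a n (k, 0) ∧
      normVal (x 0) (y 0) v = k ^ 2 / (x n + y n) := by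
  refine (h.half_le_normVal_or_euclidLift_eq 0 hv₁ hv₂).imp_right ?_
  rintro ⟨n, k, hk, heq : v = _⟩
  exact ⟨n, k, hk, heq, by rw [heq, h.normVal_euclidLift, normVal_smul_one_zero,
    abs_of_pos (h.add_pos n)]⟩

theorem exists_two_le_add (N : ℕ) : ∃ n ≥ N, 2 ≤ x n + y n := by
  by_contra! hlt
  have ha (n : ℕ) : (1 : ℝ) ≤ a n := by exact_mod_cast h.one_le_digit n
  have hpos (n : ℕ) : 0 < (x n)⁻¹ := inv_pos.2 (zero_lt_one.trans (h.one_lt n))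
  have hx := inv_strictAnti₀ (zero_lt_one.trans (h.one_lt _))
    (show x (N + 2) < 2 by linarith [hlt (N + 2) (by omega), h.nonneg (N + 2)])
  have hy := inv_strictAnti₀ (h.digit_add_pos N)
    (show a N + y N < 2 by linarith [hlt N le_rfl, h.eq_add N, hpos (N + 1)])
  have := hlt (N + 1) (by omega)
  rw [h.eq_add, h.succ_eq] at this
  linarith [ha (N + 1)]

theorem irrational : Irrational (x 0) := by
  rintro ⟨r, hr⟩
  have hr0 : 0 < r := by exact_mod_cast hr ▸ zero_lt_one.trans (h.one_lt 0)
  have hval : normVal (x 0) (y 0) (r.num, r.den) = 0 := by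
    have : (r.num : ℝ) - (r.den : ℤ) * r = 0 := by
      exact_mod_cast sub_eq_zero.2 (Rat.den_mul_eq_num r).symm
    rw [normVal, ← hr, this, zero_mul, abs_zero, zero_div]
  rcases h.half_le_normVal_or_exists (v := (r.num, r.den)) (Rat.num_pos.2 hr0) (by simp) with
    hle | ⟨n, k, hk, -, hval'⟩
  · norm_num [hval] at hle
  · have hk' : (0 : ℝ) < k := by exact_mod_cast hk
    exact (div_pos (pow_pos hk' 2) (h.add_pos n)).ne (hval.symm.trans hval')

end IsQuotientChain

/-! ### Reduced systems -/

/-- A set of pairs `(x, y)` with `1 < x` and `0 ≤ y` that is closed under the continued fraction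
step `(n + 1 / x', y) ↦ (x', 1 / (n + y))` for a suitable partial quotient `n`. -/
structure IsGaussInvariant (S : Set (ℝ × ℝ)) : Prop where
  one_lt : ∀ {x y}, (x, y) ∈ S → 1 < x
  nonneg : ∀ {x y}, (x, y) ∈ S → 0 ≤ y
  step : ∀ {x y}, (x, y) ∈ S → ∃ (n : ℤ) (x' : ℝ), x = n + x'⁻¹ ∧ (x', (n + y)⁻¹) ∈ S

/-- A Gauss invariant set of pairs that is also closed under reversal of the underlying
bi-infinite sequences of partial quotients. -/
structure IsReducedSystem (S : Set (ℝ × ℝ)) : Prop extends IsGaussInvariant S where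
  swap : ∀ {x y}, (x, y) ∈ S → (y⁻¹, x⁻¹) ∈ S

theorem IsGaussInvariant.exists_isQuotientChain {S : Set (ℝ × ℝ)} (hS : IsGaussInvariant S)
    {x₀ y₀ : ℝ} (h₀ : (x₀, y₀) ∈ S) :
    ∃ a x y, IsQuotientChain a x y ∧ x 0 = x₀ ∧ y 0 = y₀ ∧ ∀ n, (x n, y n) ∈ S := by
  choose digit next heq hmem using fun z : S => hS.step z.2
  let orbit : ℕ → S := fun n => (fun z => ⟨_, hmem z⟩)^[n] ⟨(x₀, y₀), h₀⟩
  have hsucc (n : ℕ) : orbit (n + 1) = ⟨_, hmem (orbit n)⟩ := Function.iterate_succ_apply' _ _ _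
  refine ⟨fun n => digit (orbit n), fun n => (orbit n).1.1, fun n => (orbit n).1.2,
    ⟨fun n => hS.one_lt (orbit n).2, fun n => hS.nonneg (orbit n).2, fun n => ?_, fun n => ?_⟩,
    rfl, rfl, fun n => (orbit n).2⟩
  · rw [hsucc]
    exact heq (orbit n)
  · rw [hsucc]

namespace IsReducedSystem

variable {S : Set (ℝ × ℝ)} (hS : IsReducedSystem S) {x y T : ℝ}
include hS

theorem pos (h : (x, y) ∈ S) : 0 < y :=
  inv_pos.1 (zero_lt_one.trans (hS.one_lt (hS.swap h)))

theorem lt_one (h : (x, y) ∈ S) : y < 1 :=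
  (one_lt_inv₀ (hS.pos h)).1 (hS.one_lt (hS.swap h))

theorem exists_step (h : (x, y) ∈ S) :
    ∃ (n : ℤ) (x' : ℝ), 1 ≤ n ∧ 1 < x' ∧ x = n + x'⁻¹ ∧ (x', (n + y)⁻¹) ∈ S := by
  obtain ⟨n, x', rfl, h'⟩ := hS.step h
  exact ⟨n, x', one_le_of_one_lt_add_inv (hS.one_lt h') (hS.one_lt h), hS.one_lt h', rfl, h'⟩

theorem two_le_of_forall_le (hT : ∀ {x y}, (x, y) ∈ S → x + y ≤ T) (h : (x, y) ∈ S) : 2 ≤ T := by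
  obtain ⟨a, X, Y, hchain, -, -, hmem⟩ := hS.exists_isQuotientChain h
  obtain ⟨n, -, hn⟩ := hchain.exists_two_le_add 0
  exact hn.trans (hT (hmem n))

theorem inv_le_normVal_of_nonneg (hT : ∀ {x y}, (x, y) ∈ S → x + y ≤ T) (h : (x, y) ∈ S)
    {v : ℤ × ℤ} (hv₁ : 0 < v.1) (hv₂ : 0 ≤ v.2) : T⁻¹ ≤ normVal x y v := by
  obtain ⟨a, X, Y, hchain, rfl, rfl, hmem⟩ := hS.exists_isQuotientChain h
  rcases hchain.half_le_normVal_or_exists hv₁ hv₂ with hle | ⟨n, k, hk, -, hval⟩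
  · exact (inv_anti₀ two_pos (hS.two_le_of_forall_le hT h)).trans (by simpa using hle)
  · rw [hval, inv_eq_one_div]
    have : (1 : ℝ) ≤ k := by exact_mod_cast hk
    exact div_le_div₀ (by positivity) (by nlinarith) (hchain.add_pos n) (hT (hmem n))

theorem inv_le_normVal (hT : ∀ {x y}, (x, y) ∈ S → x + y ≤ T) (h : (x, y) ∈ S)
    {v : ℤ × ℤ} (hv : v ≠ 0) : T⁻¹ ≤ normVal x y v := by
  wlog hquad : 0 < v.1 ∧ 0 ≤ v.2 ∨ 0 ≤ v.1 ∧ v.2 < 0 generalizing v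
  · rw [← normVal_neg]
    refine this (neg_ne_zero.2 hv) ?_
    rw [Ne, Prod.ext_iff, Prod.fst_zero, Prod.snd_zero] at hv
    rw [Prod.fst_neg, Prod.snd_neg]
    omega
  rcases hquad with ⟨hv₁, hv₂⟩ | ⟨hv₁, hv₂⟩
  · exact hS.inv_le_normVal_of_nonneg hT h hv₁ hv₂
  · rw [← normVal_swap v (zero_lt_one.trans (hS.one_lt h)).ne' (hS.pos h).ne']
    exact hS.inv_le_normVal_of_nonneg hT (hS.swap h) (neg_pos.2 hv₂) hv₁

theorem pairMarkovVal_le (hT : ∀ {x y}, (x, y) ∈ S → x + y ≤ T) (h : (x, y) ∈ S) :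
    pairMarkovVal x y ≤ ENNReal.ofReal T := by
  have hT0 : 0 < T := two_pos.trans_le (hS.two_le_of_forall_le hT h)
  refine iSup₂_le fun v hv => ?_
  rw [← ENNReal.inv_le_inv, inv_inv, ← ENNReal.ofReal_inv_of_pos hT0]
  exact ENNReal.ofReal_le_ofReal (hS.inv_le_normVal hT h hv)

end IsReducedSystem

/-- The reduced pairs whose form has Markov value `m`. -/
def reducedPairs (m : ℝ≥0∞) : Set (ℝ × ℝ) :=
  {z | 1 < z.1 ∧ 0 < z.2 ∧ z.2 < 1 ∧ pairMarkovVal z.1 z.2 = m}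

theorem isReducedSystem_reducedPairs {m : ℝ≥0∞} (hm : m ≠ ⊤) :
    IsReducedSystem (reducedPairs m) where
  one_lt h := h.1
  nonneg h := h.2.1.le
  step := by
    rintro x y ⟨hx, hy, -, rfl⟩
    have hn : (1 : ℝ) ≤ ⌊x⌋ := by exact_mod_cast Int.le_floor.2 (by exact_mod_cast hx.le)
    have hne : x - ⌊x⌋ ≠ 0 := by
      intro h0
      refine (normVal_pos hm (v := (⌊x⌋, 1)) (by simp [Prod.ext_iff])).ne' ?_
      rw [normVal, Int.cast_one, one_mul, ← neg_sub, h0]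
      simp
    have hpos : 0 < x - ⌊x⌋ := (sub_nonneg.2 (Int.floor_le x)).lt_of_ne' hne
    refine ⟨⌊x⌋, (x - ⌊x⌋)⁻¹, by simp, ?_, by positivity, inv_lt_one_of_one_lt₀ (by linarith), ?_⟩
    · exact (one_lt_inv₀ hpos).2 (by linarith [Int.lt_floor_add_one x])
    · rw [pairMarkovVal_inv hne (by positivity), add_comm _ y, ← pairMarkovVal_add_sub ⌊x⌋]
      simp
  swap := by
    rintro x y ⟨hx, hy, hy', rfl⟩
    exact ⟨(one_lt_inv₀ hy).2 hy', inv_pos.2 (by linarith), inv_lt_one_of_one_lt₀ hx,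
      by rw [pairMarkovVal_symm, pairMarkovVal_inv (by linarith) hy.ne']⟩

theorem add_le_toReal_of_mem_reducedPairs {m : ℝ≥0∞} (hm : m ≠ ⊤) {x y : ℝ}
    (h : (x, y) ∈ reducedPairs m) : x + y ≤ m.toReal := by
  obtain ⟨-, -, -, rfl⟩ := h
  exact (le_abs_self _).trans (abs_add_le_toReal_pairMarkovVal hm)

/-! ### Small partial quotients -/

section Constants

theorem sqrt_three_mem_Ioo : √3 ∈ Set.Ioo (1.73 : ℝ) 1.74 :=
  ⟨Real.lt_sqrt_of_sq_lt (by norm_num), (Real.sqrt_lt' (by norm_num)).2 (by norm_num)⟩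

theorem one_add_sqrt_three_inv : (1 + √3)⁻¹ = (√3 - 1) / 2 := by
  rw [inv_eq_iff_eq_inv, inv_div, eq_div_iff (by linarith [sqrt_three_mem_Ioo.1])]
  linarith [Real.mul_self_sqrt (show (0 : ℝ) ≤ 3 by norm_num)]

theorem sqrt_twelve : √12 = 2 * √3 := by
  rw [show (12 : ℝ) = 2 ^ 2 * 3 by norm_num, Real.sqrt_mul (by norm_num), Real.sqrt_sq two_pos.le]

theorem perron_eq : (65 + 9 * √3) / 22 = 3 + (√3 - 1) / 2 + (3 + (√3 - 1) / 2)⁻¹ := by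
  have : (3 + (√3 - 1) / 2)⁻¹ = (5 - √3) / 11 := by
    rw [inv_eq_one_div, div_eq_div_iff (by linarith [sqrt_three_mem_Ioo.1]) (by norm_num)]
    linarith [Real.mul_self_sqrt (show (0 : ℝ) ≤ 3 by norm_num)]
  rw [this]
  ring

theorem add_inv_le_add_inv {u v : ℝ} (hu : 1 ≤ u) (huv : u ≤ v) : u + u⁻¹ ≤ v + v⁻¹ := by
  have hpos' : 0 < v := by linarith
  have hprod : (u * v)⁻¹ ≤ 1 := inv_le_one_of_one_le₀ (by nlinarith)
  have : v + v⁻¹ - (u + u⁻¹) = (v - u) * (1 - (u * v)⁻¹) := by field_simp; ring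
  nlinarith

theorem perron_le_add_inv {u : ℝ} (hu : (√3 - 1) / 2 ≤ u) :
    (65 + 9 * √3) / 22 ≤ 3 + u + (3 + u)⁻¹ := by
  rw [perron_eq]
  exact add_inv_le_add_inv (by linarith [sqrt_three_mem_Ioo.1]) (by linarith)

end Constants

namespace IsReducedSystem

variable {S : Set (ℝ × ℝ)} (hS : IsReducedSystem S) {x y : ℝ}
include hS

theorem exists_digit_le {N : ℤ} (h : (x, y) ∈ S) (hx : x < N + 1) :
    ∃ (n : ℤ) (x' : ℝ), 1 ≤ n ∧ n ≤ N ∧ 1 < x' ∧ x = n + x'⁻¹ ∧ (x', (n + y)⁻¹) ∈ S := by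
  obtain ⟨n, x', hn, hx', rfl, h'⟩ := hS.exists_step h
  have : (n : ℝ) < (N + 1 : ℤ) := by
    push_cast
    linarith [inv_pos.2 (zero_lt_one.trans hx')]
  exact ⟨n, x', hn, Int.lt_add_one_iff.1 (Int.cast_lt.1 this), hx', rfl, h'⟩

theorem exists_digit_eq {n : ℤ} (h : (x, y) ∈ S) (hx : n ≤ x) (hx' : x < n + 1) :
    ∃ x', 1 < x' ∧ x = n + x'⁻¹ ∧ (x', (n + y)⁻¹) ∈ S := by
  obtain ⟨k, x', -, hk, hgt, rfl, h'⟩ := hS.exists_digit_le h hx'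
  have : (n : ℝ) < (k + 1 : ℤ) := by
    push_cast
    linarith [inv_lt_one_of_one_lt₀ hgt]
  obtain rfl : k = n := le_antisymm hk (Int.lt_add_one_iff.1 (Int.cast_lt.1 this))
  exact ⟨x', hgt, rfl, h'⟩

theorem one_add_inv_le {s : ℝ} (hs : 0 < s) (hle : ∀ {x y}, (x, y) ∈ S → s ≤ x)
    (hlt : ∀ {x y}, (x, y) ∈ S → x < 2 → 4 / 3 < x) (h : (x, y) ∈ S) :
    1 + (2 + s⁻¹)⁻¹ ≤ x := by
  rcases le_or_gt 2 x with hx | hx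
  · have : (2 + s⁻¹)⁻¹ ≤ 1 := inv_le_one_of_one_le₀ (by linarith [inv_pos.2 hs])
    linarith
  obtain ⟨x', hx', rfl, h'⟩ := hS.exists_digit_eq (n := 1) h
    (by exact_mod_cast (hS.one_lt h).le) (by norm_num [hx])
  have hx3 : x' < 3 := by
    have := hlt h hx
    refine (inv_lt_inv₀ (by norm_num) (zero_lt_one.trans hx')).1 ?_
    push_cast at this
    linarith
  obtain ⟨n, x'', -, hn, -, rfl, h''⟩ := hS.exists_digit_le (N := 2) h' (by norm_num [hx3])
  have hn' : (n : ℝ) ≤ 2 := by exact_mod_cast hn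
  rw [Int.cast_one]
  gcongr
  exact hle h''

theorem one_add_sqrt_three_div_two_le (hlt : ∀ {x y}, (x, y) ∈ S → x < 2 → 4 / 3 < x)
    (h : (x, y) ∈ S) : (1 + √3) / 2 ≤ x := by
  set s := sInf (Prod.fst '' S)
  have hbdd : BddBelow (Prod.fst '' S) := ⟨1, by rintro _ ⟨z, hz, rfl⟩; exact (hS.one_lt hz).le⟩
  have hne : (Prod.fst '' S).Nonempty := ⟨x, _, h, rfl⟩
  have hle {x y : ℝ} (h : (x, y) ∈ S) : s ≤ x := csInf_le hbdd ⟨_, h, rfl⟩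
  have hs1 : 1 ≤ s := le_csInf hne (by rintro _ ⟨z, hz, rfl⟩; exact (hS.one_lt hz).le)
  have hs : 1 + (2 + s⁻¹)⁻¹ ≤ s := by
    refine le_csInf hne ?_
    rintro _ ⟨z, hz, rfl⟩
    exact hS.one_add_inv_le (by linarith) hle hlt hz
  have hquad : 0 ≤ 2 * s ^ 2 - 2 * s - 1 := by
    rw [show (2 + s⁻¹)⁻¹ = s / (2 * s + 1) by field_simp, ← le_sub_iff_add_le',
      div_le_iff₀ (by linarith)] at hs
    linarith
  have hsq := Real.sq_sqrt (show (0 : ℝ) ≤ 3 by norm_num)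
  refine le_trans ?_ (hle h)
  nlinarith [Real.sqrt_nonneg 3]

theorem inv_le_sqrt_three_sub_one (hlt : ∀ {x y}, (x, y) ∈ S → x < 2 → 4 / 3 < x)
    (h : (x, y) ∈ S) : x⁻¹ ≤ √3 - 1 := by
  have := inv_anti₀ (by positivity) (hS.one_add_sqrt_three_div_two_le hlt h)
  rw [inv_div, div_eq_mul_inv, one_add_sqrt_three_inv] at this
  linarith

theorem le_one_add_sqrt_three (hlt : ∀ {x y}, (x, y) ∈ S → x < 2 → 4 / 3 < x)
    (h : (x, y) ∈ S) (hx : x < 3) : x ≤ 1 + √3 := by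
  obtain ⟨n, x', -, hn, -, rfl, h'⟩ := hS.exists_digit_le (N := 2) h (by norm_num [hx])
  have hn' : (n : ℝ) ≤ 2 := by exact_mod_cast hn
  linarith [hS.inv_le_sqrt_three_sub_one hlt h']

theorem add_le_sqrt_twelve (h3 : ∀ {x y}, (x, y) ∈ S → x < 3) (h : (x, y) ∈ S) :
    x + y ≤ √12 := by
  have hlt {x y : ℝ} (h : (x, y) ∈ S) (_ : x < 2) : 4 / 3 < x := by
    obtain ⟨n, x', hn, hx', rfl, h'⟩ := hS.exists_step h
    have hn' : (1 : ℝ) ≤ n := by exact_mod_cast hn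
    linarith [inv_strictAnti₀ (zero_lt_one.trans hx') (h3 h')]
  have hx := hS.le_one_add_sqrt_three hlt h (h3 h)
  have hy := hS.inv_le_sqrt_three_sub_one hlt (hS.swap h)
  rw [inv_inv] at hy
  rw [sqrt_twelve]
  linarith

section ConstantDigit

variable {n : ℤ} (hn : ∀ {x y}, (x, y) ∈ S → n ≤ x ∧ x < n + 1)
include hn

theorem le_of_constant_digit {x' y' : ℝ} (h : (x, y) ∈ S) (h' : (x', y') ∈ S) : x ≤ x' := by
  set A := Prod.fst '' S
  have hne : A.Nonempty := ⟨x, _, h, rfl⟩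
  have hbelow : BddBelow A := ⟨n, by rintro _ ⟨z, hz, rfl⟩; exact (hn hz).1⟩
  have habove : BddAbove A := ⟨n + 1, by rintro _ ⟨z, hz, rfl⟩; exact (hn hz).2.le⟩
  have hinf {x y : ℝ} (h : (x, y) ∈ S) : sInf A ≤ x := csInf_le hbelow ⟨_, h, rfl⟩
  have hsup {x y : ℝ} (h : (x, y) ∈ S) : x ≤ sSup A := le_csSup habove ⟨_, h, rfl⟩
  have hinf1 : 1 ≤ sInf A := le_csInf hne (by rintro _ ⟨z, hz, rfl⟩; exact (hS.one_lt hz).le)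
  have hsup_pos : 0 < sSup A := by linarith [hinf h, hsup h]
  have hsup_le : sSup A ≤ n + (sInf A)⁻¹ := by
    refine csSup_le hne ?_
    rintro _ ⟨z, hz, rfl⟩
    obtain ⟨w, -, heq, hz'⟩ := hS.exists_digit_eq hz (hn hz).1 (hn hz).2
    rw [heq]
    gcongr
    exact hinf hz'
  have hle_inf : n + (sSup A)⁻¹ ≤ sInf A := by
    refine le_csInf hne ?_
    rintro _ ⟨z, hz, rfl⟩
    obtain ⟨w, hw, heq, hz'⟩ := hS.exists_digit_eq hz (hn hz).1 (hn hz).2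
    rw [heq]
    gcongr
    exact hsup hz'
  have hprod : sSup A * sInf A ≤ n * sInf A + 1 := by
    have := mul_le_mul_of_nonneg_right hsup_le (zero_le_one.trans hinf1)
    rwa [add_mul, inv_mul_cancel₀ (by linarith)] at this
  have hprod' : n * sSup A + 1 ≤ sInf A * sSup A := by
    have := mul_le_mul_of_nonneg_right hle_inf hsup_pos.le
    rwa [add_mul, inv_mul_cancel₀ hsup_pos.ne'] at this
  have hpos : (0 : ℝ) < n := by linarith [hS.one_lt h, (hn h).2]
  have hle : sSup A ≤ sInf A := le_of_mul_le_mul_left (by linarith) hpos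
  exact (hsup h).trans (hle.trans (hinf h'))

theorem add_eq_of_constant_digit (h : (x, y) ∈ S) : x + y = √(n ^ 2 + 4) := by
  obtain ⟨x', -, heq, h'⟩ := hS.exists_digit_eq h (hn h).1 (hn h).2
  have hx := hS.one_lt h
  have hfix : x = n + x⁻¹ := by
    rwa [(hS.le_of_constant_digit hn h' h).antisymm (hS.le_of_constant_digit hn h h')] at heq
  have hy : y = x⁻¹ := by
    rw [← inv_inv y, (hS.le_of_constant_digit hn (hS.swap h) h).antisymm
      (hS.le_of_constant_digit hn h (hS.swap h))]
  have hsq : x ^ 2 = n * x + 1 := by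
    field_simp at hfix
    linarith
  rw [hy, ← sub_eq_iff_eq_add'.2 hfix, eq_comm, Real.sqrt_eq_iff_eq_sq (by positivity)]
  · linear_combination -4 * hsq
  · linarith [(hn h).1]

end ConstantDigit

section BelowPerron

variable (hlt : ∀ {x y}, (x, y) ∈ S → x + y < (65 + 9 * √3) / 22)
include hlt

theorem lt_four_of_add_lt (h : (x, y) ∈ S) : x < 4 := by
  linarith [hlt h, hS.pos h, sqrt_three_mem_Ioo.2]

theorem four_thirds_lt_of_add_lt (h : (x, y) ∈ S) (hx : x < 2) : 4 / 3 < x := by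
  by_contra! hx'
  obtain ⟨x', hx₁, rfl, h'⟩ := hS.exists_digit_eq (n := 1) h
    (by exact_mod_cast (hS.one_lt h).le) (by norm_num [hx])
  rw [Int.cast_one] at *
  have h3 : 3 ≤ x' := by
    rw [← inv_le_inv₀ (by linarith) (by norm_num)]
    linarith
  obtain ⟨x'', hx₂, rfl, h''⟩ := hS.exists_digit_eq (n := 3) h' (by exact_mod_cast h3)
    (by norm_num [hS.lt_four_of_add_lt hlt h'])
  have hx'' := inv_strictAnti₀ (by linarith) (hS.lt_four_of_add_lt hlt h'')
  have hy : (2 : ℝ)⁻¹ < (1 + y)⁻¹ :=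
    inv_strictAnti₀ (by linarith [hS.pos h]) (by linarith [hS.lt_one h])
  have := hlt h'
  push_cast at this
  linarith [sqrt_three_mem_Ioo.2]

theorem sqrt_three_sub_one_div_two_le_inv (h : (x, y) ∈ S) (hx : x < 3) :
    (√3 - 1) / 2 ≤ x⁻¹ := by
  rw [← one_add_sqrt_three_inv]
  exact inv_anti₀ (zero_lt_one.trans (hS.one_lt h))
    (hS.le_one_add_sqrt_three (hS.four_thirds_lt_of_add_lt hlt) h hx)

theorem three_le_inv_of_three_le (h : (x, y) ∈ S) (hx : 3 ≤ x) : 3 ≤ y⁻¹ := by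
  by_contra! hy
  have hy' := hS.sqrt_three_sub_one_div_two_le_inv hlt (hS.swap h) hy
  rw [inv_inv] at hy'
  obtain ⟨x', hx', rfl, h'⟩ := hS.exists_digit_eq (n := 3) h (by exact_mod_cast hx)
    (by norm_num [hS.lt_four_of_add_lt hlt h])
  have hsum := hlt h
  have hsum' := hlt h'
  push_cast at hsum hsum'
  rcases lt_or_ge x' 3 with hx3 | hx3
  · linarith [hS.sqrt_three_sub_one_div_two_le_inv hlt h' hx3, sqrt_three_mem_Ioo.1]
  obtain ⟨v, rfl⟩ : ∃ v, x' = 3 + v := ⟨x' - 3, by ring⟩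
  rcases le_total v y with hvy | hvy
  · have := inv_anti₀ (by linarith) (add_le_add_right hvy 3)
    linarith [perron_le_add_inv hy']
  · have := inv_anti₀ (by linarith [hS.pos h]) (add_le_add_right hvy 3)
    linarith [perron_le_add_inv (hy'.trans hvy)]

theorem isReducedSystem_three_le : IsReducedSystem {z ∈ S | 3 ≤ z.1} where
  one_lt h := hS.one_lt h.1
  nonneg h := hS.nonneg h.1
  step := by
    rintro x y ⟨h, hx : 3 ≤ x⟩
    obtain ⟨x', -, heq, h'⟩ := hS.exists_digit_eq (n := 3) h (by exact_mod_cast hx)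
      (by norm_num [hS.lt_four_of_add_lt hlt h])
    refine ⟨3, x', heq, h', ?_⟩
    have hflip := hS.three_le_inv_of_three_le hlt (hS.swap h')
    rw [inv_inv, inv_inv] at hflip
    exact hflip (by push_cast; linarith [hS.pos h])
  swap := fun ⟨h, hx⟩ => ⟨hS.swap h, hS.three_le_inv_of_three_le hlt h hx⟩

theorem add_eq_sqrt_thirteen (h : (x, y) ∈ S) (hx : 3 ≤ x) : x + y = √13 := by
  have := (hS.isReducedSystem_three_le hlt).add_eq_of_constant_digit (n := 3)
    (fun h => ⟨by exact_mod_cast h.2, by norm_num [hS.lt_four_of_add_lt hlt h.1]⟩) ⟨h, hx⟩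
  norm_num [this]

end BelowPerron

end IsReducedSystem

theorem le_sqrt_twelve_or_eq_sqrt_thirteen {t : ℝ} (ht : t ∈ MarkovSpectrum)
    (hlt : t < (65 + 9 * √3) / 22) : t ≤ √12 ∨ t = √13 := by
  obtain ⟨x₀, y₀, hne, htop, rfl⟩ := mem_markovSpectrum_iff.1 ht
  set m := pairMarkovVal x₀ y₀
  have hS := isReducedSystem_reducedPairs htop
  have hsum {x y : ℝ} (h : (x, y) ∈ reducedPairs m) : x + y < (65 + 9 * √3) / 22 :=
    (add_le_toReal_of_mem_reducedPairs htop h).trans_lt hlt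
  by_cases h3 : ∀ {x y}, (x, y) ∈ reducedPairs m → x < 3
  · left
    obtain ⟨x, y, hx, hy, hy', hval⟩ := exists_reduced hne htop
    have hmem : (x, y) ∈ reducedPairs m := ⟨hx, hy, hy', hval⟩
    exact ENNReal.toReal_le_of_le_ofReal (Real.sqrt_nonneg _)
      (hval.symm.trans_le (hS.pairMarkovVal_le (hS.add_le_sqrt_twelve h3) hmem))
  · right
    push Not at h3
    obtain ⟨x, y, h, hx⟩ := h3
    refine le_antisymm (ENNReal.toReal_le_of_le_ofReal (Real.sqrt_nonneg _) ?_)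
      (hS.add_eq_sqrt_thirteen hsum h hx ▸ add_le_toReal_of_mem_reducedPairs htop h)
    rw [← h.2.2.2]
    exact (hS.isReducedSystem_three_le hsum).pairMarkovVal_le
      (fun h => (hS.add_eq_sqrt_thirteen hsum h.1 h.2).le) ⟨h, hx⟩

/-! ### Lagrange values as upper limits along a chain -/

section DistNearestInt

variable {α : ℝ}

theorem distNearestInt_le (x : ℝ) (p : ℤ) : distNearestInt x ≤ |x - p| :=
  round_le x p

theorem distNearestInt_add_intCast (x : ℝ) (n : ℤ) :
    distNearestInt (x + n) = distNearestInt x := by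
  rw [distNearestInt, distNearestInt, round_add_intCast]
  push_cast
  rw [add_sub_add_right_eq_sub]

theorem lagrangeVal_add_intCast (α : ℝ) (n : ℤ) : lagrangeVal (α + n) = lagrangeVal α := by
  unfold lagrangeVal
  refine congrArg (limsup · atTop) (funext fun q => ?_)
  rw [← distNearestInt_add_intCast (q * α) (q * n), mul_add]
  push_cast
  rfl

theorem normVal_zero_right {x : ℝ} (hx : x ≠ 0) (q : ℕ) (p : ℤ) :
    normVal x 0 (q, p) = q * |q * x⁻¹ - p| := by
  rw [normVal, add_zero, ← abs_div, show ((q : ℤ) - p * x) * ((q : ℤ) + p * 0) / x =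
    q * (q * x⁻¹ - p) by push_cast; field_simp; ring, abs_mul, Nat.abs_cast]

theorem mul_distNearestInt_pos (hα : Irrational α) {q : ℕ} (hq : 0 < q) :
    0 < q * distNearestInt (q * α) := by
  have := sub_ne_zero.2 ((hα.natCast_mul hq.ne').ne_int (round (q * α)))
  exact mul_pos (by exact_mod_cast hq) (abs_pos.2 this)

end DistNearestInt

theorem limsup_ofReal_eq_iff {u : ℕ → ℝ} (hu : ∀ n, 0 ≤ u n) {t : ℝ} (ht : 0 ≤ t) :
    limsup (fun n => ENNReal.ofReal (u n)) atTop = ENNReal.ofReal t ↔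
      (∀ T > t, ∀ᶠ n in atTop, u n < T) ∧ MapClusterPt t atTop u := by
  constructor
  · intro h
    constructor
    · intro T hT
      have hlt : limsup (fun n => ENNReal.ofReal (u n)) atTop < ENNReal.ofReal T :=
        h.trans_lt ((ENNReal.ofReal_lt_ofReal_iff (ht.trans_lt hT)).2 hT)
      exact (eventually_lt_of_limsup_lt hlt).mono fun n hn => ENNReal.ofReal_mono.reflect_lt hn
    · have := (h ▸ MapClusterPt.limsup (f := atTop)).tendsto_comp
        (ENNReal.tendsto_toReal (ENNReal.ofReal_ne_top (r := t)))
      simpa only [Function.comp_def, ENNReal.toReal_ofReal, ht, hu] using this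
  · rintro ⟨hlt, hcluster⟩
    refine le_antisymm (le_of_not_gt fun hgt => ?_)
      (hcluster.continuousAt_comp ENNReal.continuous_ofReal.continuousAt).le_limsup
    obtain ⟨T, -, htT, hT⟩ := ENNReal.lt_iff_exists_real_btwn.1 hgt
    refine hT.not_ge (limsup_le_of_le (h := ?_))
    exact (hlt T (ENNReal.ofReal_mono.reflect_lt htT)).mono fun n hn =>
      ENNReal.ofReal_le_ofReal hn.le

theorem exists_isQuotientChain_of_irrational {x₀ : ℝ} (hirr : Irrational x₀) (hx₀ : 1 < x₀) :
    ∃ a x y, IsQuotientChain a x y ∧ x 0 = x₀ ∧ y 0 = 0 := by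
  have hS : IsGaussInvariant {z : ℝ × ℝ | Irrational z.1 ∧ 1 < z.1 ∧ 0 ≤ z.2} := by
    refine ⟨fun h => h.2.1, fun h => h.2.2, ?_⟩
    rintro x y ⟨hirr, hx, hy⟩
    have hfract : Irrational (x - ⌊x⌋) := hirr.sub_intCast _
    have hpos : 0 < x - ⌊x⌋ := (sub_nonneg.2 (Int.floor_le x)).lt_of_ne' hfract.ne_zero
    exact ⟨⌊x⌋, (x - ⌊x⌋)⁻¹, by simp, hfract.inv,
      (one_lt_inv₀ hpos).2 (by linarith [Int.lt_floor_add_one x]), by positivity⟩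
  obtain ⟨a, x, y, hchain, hx, hy, -⟩ := hS.exists_isQuotientChain ⟨hirr, hx₀, le_rfl⟩
  exact ⟨a, x, y, hchain, hx, hy⟩

namespace IsQuotientChain

variable {a : ℕ → ℤ} {x y : ℕ → ℝ} (h : IsQuotientChain a x y)
include h

theorem eventually_inv_le_normVal {T : ℝ} (hT : ∀ᶠ n in atTop, x n + y n ≤ T) :
    ∀ᶠ p : ℤ in atTop, ∀ q ≥ 0, T⁻¹ ≤ normVal (x 0) (y 0) (p, q) := by
  obtain ⟨N, hN⟩ := eventually_atTop.1 hT
  obtain ⟨i, hi, hi2⟩ := h.exists_two_le_add N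
  have hT2 : T⁻¹ ≤ 1 / 2 := by
    rw [inv_eq_one_div]
    exact one_div_le_one_div_of_le two_pos (hi2.trans (hN i hi))
  have hlarge : ∀ᶠ p : ℤ in atTop, ∀ n ∈ Finset.range N,
      ⌈x n + y n⌉ * (euclidLift a n (1, 0)).1 ≤ p :=
    (Finset.eventually_all _).2 fun n _ => eventually_ge_atTop _
  filter_upwards [hlarge, eventually_gt_atTop 0] with p hp hp0 q hq
  rcases h.half_le_normVal_or_exists (v := (p, q)) hp0 hq with hle | ⟨n, k, hk, heq, hval⟩
  · exact hT2.trans hle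
  have hk' : (1 : ℝ) ≤ k := by exact_mod_cast hk
  rw [hval]
  rcases le_or_gt N n with hn | hn
  · rw [inv_eq_one_div]
    exact div_le_div₀ (by positivity) (by nlinarith) (h.add_pos n) (hN n hn)
  · have hpk : p = k * (euclidLift a n (1, 0)).1 := by
      rw [← fst_euclidLift_mul, ← heq]
    have hQ : 0 < (euclidLift a n (1, 0)).1 := pos_of_mul_pos_right (hpk ▸ hp0) (by omega)
    have hceil := le_of_mul_le_mul_right ((hp n (Finset.mem_range.2 hn)).trans_eq hpk) hQ
    have hsum : x n + y n ≤ k := (Int.le_ceil _).trans (by exact_mod_cast hceil)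
    exact hT2.trans ((by norm_num : (1 / 2 : ℝ) ≤ 1).trans
      ((one_le_div₀ (h.add_pos n)).2 (by nlinarith)))

variable (hy : y 0 = 0)
include hy

theorem limsup_le_lagrangeVal :
    limsup (fun n => ENNReal.ofReal (x n + y n)) atTop ≤ lagrangeVal (x 0)⁻¹ := by
  have hirr := h.irrational.inv
  set q : ℕ → ℕ := fun n => (euclidLift a n (1, 0)).1.toNat
  have hq : Tendsto q atTop atTop := tendsto_atTop_mono
    (fun n => (Int.le_toNat (by linarith [le_fst_euclidLift h.one_le_digit n])).2
      (le_fst_euclidLift h.one_le_digit n)) tendsto_id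
  refine le_trans (limsup_le_limsup ?_) hq.limsup_comp_le_limsup
  filter_upwards [hq.eventually_gt_atTop 0] with n hn
  refine ENNReal.ofReal_le_ofReal ((le_one_div (h.add_pos n) (mul_distNearestInt_pos hirr hn)).2 ?_)
  have hval := h.normVal_euclidLift n (1, 0)
  rw [normVal_smul_one_zero, abs_of_pos (h.add_pos n), hy, Int.cast_one, one_pow] at hval
  calc q n * distNearestInt (q n * (x 0)⁻¹)
      ≤ q n * |q n * (x 0)⁻¹ - (euclidLift a n (1, 0)).2| := by
        gcongr
        exact distNearestInt_le _ _
    _ = 1 / (x n + y n) := by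
        rw [← normVal_zero_right h.irrational.ne_zero, ← hval]
        exact congrArg _ (Prod.ext (Int.toNat_of_nonneg (Int.lt_toNat.1 hn).le) rfl)

theorem lagrangeVal_le_limsup :
    lagrangeVal (x 0)⁻¹ ≤ limsup (fun n => ENNReal.ofReal (x n + y n)) atTop := by
  refine le_of_not_gt fun hgt => ?_
  obtain ⟨T, -, hlt, hT⟩ := ENNReal.lt_iff_exists_real_btwn.1 hgt
  have hT' : ∀ᶠ n in atTop, x n + y n ≤ T := (eventually_lt_of_limsup_lt hlt).mono
    fun n hn => (ENNReal.ofReal_mono.reflect_lt hn).le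
  refine hT.not_ge (limsup_le_of_le (h := ?_))
  filter_upwards [tendsto_natCast_atTop_atTop.eventually (h.eventually_inv_le_normVal hT'),
    eventually_gt_atTop 0] with q hq hq0
  have hround : 0 ≤ round (q * (x 0)⁻¹) := by
    have := zero_lt_one.trans (h.one_lt 0)
    rw [round_eq]
    positivity
  have hle := hq _ hround
  rw [hy, normVal_zero_right h.irrational.ne_zero] at hle
  rw [one_div]
  exact ENNReal.ofReal_le_ofReal
    (inv_le_of_inv_le₀ (ENNReal.ofReal_pos.1 (bot_le.trans_lt hlt)) hle)

theorem lagrangeVal_eq_limsup :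
    lagrangeVal (x 0)⁻¹ = limsup (fun n => ENNReal.ofReal (x n + y n)) atTop :=
  (h.lagrangeVal_le_limsup hy).antisymm (h.limsup_le_lagrangeVal hy)

end IsQuotientChain

theorem mem_lagrangeSpectrum_iff {t : ℝ} :
    t ∈ LagrangeSpectrum ↔ ∃ a x y, IsQuotientChain a x y ∧ y 0 = 0 ∧
      (∀ T > t, ∀ᶠ n in atTop, x n + y n < T) ∧ MapClusterPt t atTop fun n => x n + y n := by
  constructor
  · rintro ⟨α, hα, htop, rfl⟩
    have hfract : Irrational (α - ⌊α⌋) := hα.sub_intCast _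
    have hpos : 0 < α - ⌊α⌋ := (sub_nonneg.2 (Int.floor_le α)).lt_of_ne' hfract.ne_zero
    obtain ⟨a, x, y, h, hx, hy⟩ := exists_isQuotientChain_of_irrational hfract.inv
      ((one_lt_inv₀ hpos).2 (by linarith [Int.lt_floor_add_one α]))
    have hval := h.lagrangeVal_eq_limsup hy
    rw [hx, inv_inv, ← lagrangeVal_add_intCast _ ⌊α⌋, sub_add_cancel,
      ← ENNReal.ofReal_toReal htop] at hval
    exact ⟨a, x, y, h, hy,
      (limsup_ofReal_eq_iff (fun n => (h.add_pos n).le) ENNReal.toReal_nonneg).1 hval.symm⟩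
  · rintro ⟨a, x, y, h, hy, hlt, hcluster⟩
    have ht : 0 ≤ t := le_of_forall_gt fun T hT =>
      let ⟨n, hn⟩ := (hlt T hT).exists
      (h.add_pos n).trans hn
    have hval := (h.lagrangeVal_eq_limsup hy).trans
      ((limsup_ofReal_eq_iff (fun n => (h.add_pos n).le) ht).2 ⟨hlt, hcluster⟩)
    exact ⟨(x 0)⁻¹, h.irrational.inv, hval ▸ ENNReal.ofReal_ne_top,
      hval ▸ ENNReal.toReal_ofReal ht⟩

/-! ### The Lagrange spectrum is contained in the Markov spectrum -/

theorem isReducedSystem_union_swap {Ω : Set (ℝ × ℝ)} (hx : ∀ {x y}, (x, y) ∈ Ω → 1 ≤ x)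
    (hy : ∀ {x y}, (x, y) ∈ Ω → 0 ≤ y)
    (forward : ∀ {x y}, (x, y) ∈ Ω →
      ∃ (n : ℤ) (x' : ℝ), 1 ≤ n ∧ x = n + x'⁻¹ ∧ (x', (n + y)⁻¹) ∈ Ω)
    (backward : ∀ {x y}, (x, y) ∈ Ω →
      ∃ (n : ℤ) (y' : ℝ), 1 ≤ n ∧ y = (n + y')⁻¹ ∧ (n + x⁻¹, y') ∈ Ω) :
    IsReducedSystem {z | z ∈ Ω ∨ (z.2⁻¹, z.1⁻¹) ∈ Ω} := by
  have one_lt {x y : ℝ} (h : (x, y) ∈ Ω) : 1 < x := by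
    obtain ⟨n, x', hn, rfl, h'⟩ := forward h
    have hn' : (1 : ℝ) ≤ n := by exact_mod_cast hn
    exact lt_add_of_le_of_pos hn' (inv_pos.2 (zero_lt_one.trans_le (hx h')))
  have pos {x y : ℝ} (h : (x, y) ∈ Ω) : 0 < y := by
    obtain ⟨n, y', hn, rfl, h'⟩ := backward h
    have hn' : (0 : ℝ) < n := by exact_mod_cast hn
    exact inv_pos.2 (add_pos_of_pos_of_nonneg hn' (hy h'))
  have one_lt_inv {x y : ℝ} (h : (x, y) ∈ Ω) : 1 < y⁻¹ := by
    obtain ⟨n, y', hn, rfl, h'⟩ := backward h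
    have hn' : (1 : ℝ) ≤ n := by exact_mod_cast hn
    exact (inv_inv (n + y')).symm ▸ lt_add_of_le_of_pos hn' (pos h')
  refine ⟨⟨?_, ?_, ?_⟩, fun h => by simpa [or_comm] using h⟩
  · rintro x y (h | h)
    · exact one_lt h
    · simpa using one_lt_inv h
  · rintro x y (h | h)
    · exact hy h
    · exact inv_nonneg.1 (zero_le_one.trans (hx h))
  · rintro x y (h | h)
    · obtain ⟨n, x', -, rfl, h'⟩ := forward h
      exact ⟨n, x', rfl, .inl h'⟩
    · obtain ⟨n, y', -, heq, hprev⟩ := backward h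
      exact ⟨n, y'⁻¹, by simpa using heq, .inr (by simpa using hprev)⟩

/-- The cluster points of the sequence of pairs of complete and backward quotients. -/
def clusterPairs (x y : ℕ → ℝ) : Set (ℝ × ℝ) :=
  {z | MapClusterPt z atTop fun n => (x n, y n)}

namespace IsQuotientChain

variable {a : ℕ → ℤ} {x y : ℕ → ℝ} (h : IsQuotientChain a x y) {T : ℝ}
  (hT : ∀ᶠ n in atTop, x n + y n ≤ T)
include h hT

theorem exists_tendsto_step (𝒰 : Ultrafilter ℕ) (h𝒰 : (𝒰 : Filter ℕ) ≤ atTop) :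
    ∃ (n : ℤ) (X Y : ℝ), 1 ≤ n ∧ Tendsto (fun k => (x k, y k)) 𝒰 (𝓝 (n + X⁻¹, Y)) ∧
      Tendsto (fun k => (x (k + 1), y (k + 1))) 𝒰 (𝓝 (X, (n + Y)⁻¹)) := by
  have hdigit : ∀ᶠ k in 𝒰, ∃ n ∈ Set.Icc 1 ⌊T⌋, a k = n := by
    filter_upwards [h𝒰 hT] with k hk
    refine ⟨a k, ⟨h.one_le_digit k, Int.le_floor.2 ?_⟩, rfl⟩
    have := inv_pos.2 (zero_lt_one.trans (h.one_lt (k + 1)))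
    linarith [h.eq_add k, h.nonneg k]
  obtain ⟨n, ⟨hn, -⟩, ha⟩ := (𝒰.eventually_exists_mem_iff (Set.finite_Icc _ _)).1 hdigit
  have hx : ∀ᶠ k in 𝒰, x (k + 1) ∈ Set.Icc 1 T := by
    filter_upwards [h𝒰 ((tendsto_add_atTop_nat 1).eventually hT)] with k hk
    exact ⟨(h.one_lt _).le, by linarith [h.nonneg (k + 1)]⟩
  have hy : ∀ᶠ k in 𝒰, y k ∈ Set.Icc 0 T := by
    filter_upwards [h𝒰 hT] with k hk
    exact ⟨h.nonneg k, by linarith [h.one_lt k]⟩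
  obtain ⟨X, hX, hxlim⟩ := isCompact_Icc.ultrafilter_le_nhds (𝒰.map fun k => x (k + 1))
    (le_principal_iff.2 hx)
  obtain ⟨Y, hY, hylim⟩ := isCompact_Icc.ultrafilter_le_nhds (𝒰.map y) (le_principal_iff.2 hy)
  have hn' : (0 : ℝ) < n := by exact_mod_cast hn
  have hXinv : Tendsto (fun k => (x (k + 1))⁻¹) 𝒰 (𝓝 X⁻¹) :=
    Tendsto.inv₀ hxlim (zero_lt_one.trans_le hX.1).ne'
  have hYinv : Tendsto (fun k => ((n : ℝ) + y k)⁻¹) 𝒰 (𝓝 (n + Y)⁻¹) :=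
    (Tendsto.const_add _ hylim).inv₀ (add_pos_of_pos_of_nonneg hn' hY.1).ne'
  refine ⟨n, X, Y, hn, Tendsto.prodMk_nhds ((hXinv.const_add (n : ℝ)).congr' ?_) hylim,
    Tendsto.prodMk_nhds hxlim (hYinv.congr' ?_)⟩
  · exact ha.mono fun k hk => by rw [h.eq_add k, hk]
  · exact ha.mono fun k hk => by simp only [h.succ_eq, hk]

theorem exists_forward_clusterPairs {X Y : ℝ} (hXY : (X, Y) ∈ clusterPairs x y) :
    ∃ (n : ℤ) (X' : ℝ), 1 ≤ n ∧ X = n + X'⁻¹ ∧ (X', (n + Y)⁻¹) ∈ clusterPairs x y := by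
  obtain ⟨𝒰, h𝒰, hlim⟩ := mapClusterPt_iff_ultrafilter.1 hXY
  obtain ⟨n, X', Y', hn, hcur, hnext⟩ := h.exists_tendsto_step hT 𝒰 h𝒰
  obtain ⟨rfl, rfl⟩ := Prod.mk.inj (tendsto_nhds_unique hlim hcur)
  exact ⟨n, X', hn, rfl, mapClusterPt_iff_ultrafilter.2
    ⟨𝒰.map (· + 1), (tendsto_add_atTop_nat 1).mono_left h𝒰, hnext⟩⟩

theorem exists_backward_clusterPairs {X Y : ℝ} (hXY : (X, Y) ∈ clusterPairs x y) :
    ∃ (n : ℤ) (Y' : ℝ), 1 ≤ n ∧ Y = (n + Y')⁻¹ ∧ (n + X⁻¹, Y') ∈ clusterPairs x y := by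
  obtain ⟨𝒰, h𝒰, hlim⟩ := mapClusterPt_iff_ultrafilter.1 hXY
  have hpred : Tendsto (· - 1) (𝒰 : Filter ℕ) atTop := (tendsto_sub_atTop_nat 1).mono_left h𝒰
  obtain ⟨n, X', Y', hn, hcur, hnext⟩ := h.exists_tendsto_step hT (𝒰.map (· - 1)) hpred
  have hlim' : Tendsto (fun k => (x k, y k)) 𝒰 (𝓝 (X', (n + Y')⁻¹)) := by
    refine Tendsto.congr' ?_ (tendsto_map'_iff.1 hnext)
    filter_upwards [h𝒰 (eventually_ge_atTop 1)] with k hk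
    simp [Nat.sub_add_cancel hk]
  obtain ⟨rfl, rfl⟩ := Prod.mk.inj (tendsto_nhds_unique hlim hlim')
  exact ⟨n, Y', hn, rfl, mapClusterPt_iff_ultrafilter.2 ⟨𝒰.map (· - 1), hpred, hcur⟩⟩

theorem isReducedSystem_clusterPairs :
    IsReducedSystem {z | z ∈ clusterPairs x y ∨ (z.2⁻¹, z.1⁻¹) ∈ clusterPairs x y} := by
  refine isReducedSystem_union_swap (fun {X Y} hXY => ?_) (fun {X Y} hXY => ?_)
    (h.exists_forward_clusterPairs hT) (h.exists_backward_clusterPairs hT) <;>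
  obtain ⟨𝒰, -, hlim⟩ := mapClusterPt_iff_ultrafilter.1 hXY
  · exact ge_of_tendsto' hlim.fst_nhds fun n => (h.one_lt n).le
  · exact ge_of_tendsto' hlim.snd_nhds h.nonneg

theorem exists_mem_clusterPairs_add_eq {t : ℝ}
    (hcluster : MapClusterPt t atTop fun n => x n + y n) :
    ∃ X Y, (X, Y) ∈ clusterPairs x y ∧ X + Y = t := by
  obtain ⟨𝒰, h𝒰, hlim⟩ := mapClusterPt_iff_ultrafilter.1 hcluster
  obtain ⟨n, X, Y, -, hcur, -⟩ := h.exists_tendsto_step hT 𝒰 h𝒰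
  exact ⟨_, Y, mapClusterPt_iff_ultrafilter.2 ⟨𝒰, h𝒰, hcur⟩,
    tendsto_nhds_unique (hcur.fst_nhds.add hcur.snd_nhds) hlim⟩

end IsQuotientChain

theorem add_le_of_mem_clusterPairs {x y : ℕ → ℝ} {t : ℝ}
    (hlt : ∀ T > t, ∀ᶠ n in atTop, x n + y n < T) {X Y : ℝ} (hXY : (X, Y) ∈ clusterPairs x y) :
    X + Y ≤ t := by
  obtain ⟨𝒰, h𝒰, hlim⟩ := mapClusterPt_iff_ultrafilter.1 hXY
  exact le_of_forall_gt_imp_ge_of_dense fun T hT =>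
    le_of_tendsto (hlim.fst_nhds.add hlim.snd_nhds) (h𝒰 ((hlt T hT).mono fun n => le_of_lt))

theorem lagrangeSpectrum_subset_markovSpectrum : LagrangeSpectrum ⊆ MarkovSpectrum := by
  intro t ht
  obtain ⟨a, x, y, h, -, hlt, hcluster⟩ := mem_lagrangeSpectrum_iff.1 ht
  have hT : ∀ᶠ n in atTop, x n + y n ≤ t + 1 := (hlt _ (lt_add_one t)).mono fun n => le_of_lt
  obtain ⟨X, Y, hXY, rfl⟩ := h.exists_mem_clusterPairs_add_eq hT hcluster
  have hS := h.isReducedSystem_clusterPairs hT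
  have hle : pairMarkovVal X Y ≤ ENNReal.ofReal (X + Y) := by
    refine hS.pairMarkovVal_le (fun {u w} huw => ?_) (.inl hXY)
    rcases huw with huw | huw
    · exact add_le_of_mem_clusterPairs hlt huw
    · obtain ⟨n, w', -, heq, hprev⟩ := h.exists_backward_clusterPairs hT huw
      have hu : u = n + w' := inv_inj.1 heq
      calc u + w = n + w⁻¹⁻¹ + w' := by rw [hu, inv_inv, add_right_comm]
        _ ≤ X + Y := add_le_of_mem_clusterPairs hlt hprev
  have hpos : 0 < X + Y := add_pos (zero_lt_one.trans (hS.one_lt (.inl hXY))) (hS.pos (.inl hXY))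
  have htop := ne_top_of_le_ne_top ENNReal.ofReal_ne_top hle
  exact mem_markovSpectrum_iff.2 ⟨X, Y, hpos.ne', htop,
    (ENNReal.toReal_le_of_le_ofReal hpos.le hle).antisymm
      ((le_abs_self _).trans (abs_add_le_toReal_pairMarkovVal htop))⟩

/-! ### Three elements of the Lagrange spectrum -/

section Contraction

theorem abs_inv_add_sub_le {a v w : ℝ} (ha : 1 ≤ a) (hv : 0 ≤ v) (hw : 0 ≤ w) :
    |(a + w)⁻¹ - (a + v)⁻¹| ≤ (a + v)⁻¹ * |w - v| := by
  have hav : 0 < a + v := by linarith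
  have haw : 1 ≤ a + w := by linarith
  have heq : (a + w)⁻¹ - (a + v)⁻¹ = (a + w)⁻¹ * ((a + v)⁻¹ * (v - w)) := by
    rw [inv_sub_inv (by linarith) hav.ne', add_sub_add_left_eq_sub, div_eq_inv_mul, mul_inv,
      mul_assoc]
  rw [heq, abs_mul, abs_mul, abs_of_pos (inv_pos.2 (by linarith)), abs_of_pos (inv_pos.2 hav),
    abs_sub_comm]
  exact mul_le_of_le_one_left (by positivity) (inv_le_one_of_one_le₀ haw)

theorem tendsto_of_abs_succ_sub_le {u : ℕ → ℝ} {l r : ℝ} (hr₀ : 0 ≤ r) (hr₁ : r < 1)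
    (h : ∀ k, |u (k + 1) - l| ≤ r * |u k - l|) : Tendsto u atTop (𝓝 l) := by
  refine tendsto_iff_norm_sub_tendsto_zero.2 (squeeze_zero (fun _ => norm_nonneg _)
    (fun k => le_geom (u := fun k => |u k - l|) hr₀ k fun i _ => h i) ?_)
  simpa using (tendsto_pow_atTop_nhds_zero_of_lt_one hr₀ hr₁).mul_const |u 0 - l|

theorem one_add_half_sqrt_three_sub_one_inv : (1 + (√3 - 1) / 2)⁻¹ = √3 - 1 := by
  rw [show 1 + (√3 - 1) / 2 = (1 + √3) / 2 by ring, inv_div, div_eq_mul_inv,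
    one_add_sqrt_three_inv]
  ring

-- `(√3 - 1) / 2 = [0; 2, 1, 2, 1, …]` is fixed by the map below.
theorem abs_two_one_sub_le {w : ℝ} (hw : 0 ≤ w) :
    |(2 + (1 + w)⁻¹)⁻¹ - (√3 - 1) / 2| ≤ 1 / 2 * |w - (√3 - 1) / 2| := by
  obtain ⟨hl, hu⟩ := sqrt_three_mem_Ioo
  have hinv : (2 + (√3 - 1))⁻¹ = (√3 - 1) / 2 := by
    rw [show 2 + (√3 - 1) = 1 + √3 by ring, one_add_sqrt_three_inv]
  calc |(2 + (1 + w)⁻¹)⁻¹ - (√3 - 1) / 2|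
      ≤ (√3 - 1) / 2 * |(1 + w)⁻¹ - (√3 - 1)| := by
        have := abs_inv_add_sub_le one_le_two (show 0 ≤ √3 - 1 by linarith)
          (show 0 ≤ (1 + w)⁻¹ by positivity)
        rwa [hinv] at this
    _ ≤ (√3 - 1) / 2 * ((√3 - 1) * |w - (√3 - 1) / 2|) := by
        have := abs_inv_add_sub_le le_rfl (show 0 ≤ (√3 - 1) / 2 by linarith) hw
        rw [one_add_half_sqrt_three_sub_one_inv] at this
        exact mul_le_mul_of_nonneg_left this (by linarith)
    _ ≤ 1 / 2 * |w - (√3 - 1) / 2| := by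
        rw [← mul_assoc]
        exact mul_le_mul_of_nonneg_right (by nlinarith) (abs_nonneg _)

end Contraction

/-- The backward quotients `[0; a (n - 1), …, a 0]`. -/
noncomputable def backwardQuotient (a : ℕ → ℤ) : ℕ → ℝ
  | 0 => 0
  | n + 1 => (a n + backwardQuotient a n)⁻¹

/-- The finite continued fraction `[a n; a (n + 1), …, a (n + k - 1), 1]`. -/
noncomputable def finiteQuotient (a : ℕ → ℤ) : ℕ → ℕ → ℝ
  | 0, _ => 1
  | k + 1, n => a n + (finiteQuotient a k (n + 1))⁻¹

section Existence

variable {a : ℕ → ℤ} (ha : ∀ n, 1 ≤ a n)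
include ha

theorem backwardQuotient_nonneg (n : ℕ) : 0 ≤ backwardQuotient a n := by
  cases n with
  | zero => exact le_rfl
  | succ n =>
    have : (1 : ℝ) ≤ a n := by exact_mod_cast ha n
    exact inv_nonneg.2 (add_nonneg (by linarith) (backwardQuotient_nonneg n))

theorem isQuotientChain_backwardQuotient {x : ℕ → ℝ} (hx : ∀ n, 0 < x n)
    (heq : ∀ n, x n = a n + (x (n + 1))⁻¹) : IsQuotientChain a x (backwardQuotient a) where
  one_lt n := by
    have : (1 : ℝ) ≤ a n := by exact_mod_cast ha n
    rw [heq]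
    exact lt_add_of_le_of_pos this (inv_pos.2 (hx (n + 1)))
  nonneg := backwardQuotient_nonneg ha
  eq_add := heq
  succ_eq _ := rfl

theorem finiteQuotient_mem_Icc (k n : ℕ) :
    finiteQuotient a k n ∈ Set.Icc (1 : ℝ) (a n + 1) := by
  have hn : (1 : ℝ) ≤ a n := by exact_mod_cast ha n
  cases k with
  | zero => exact ⟨le_rfl, by rw [finiteQuotient]; linarith⟩
  | succ k =>
    have h := (finiteQuotient_mem_Icc k (n + 1)).1
    exact ⟨le_add_of_le_of_nonneg hn (inv_nonneg.2 (zero_le_one.trans h)),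
      add_le_add_right (inv_le_one_of_one_le₀ h) _⟩

theorem exists_isQuotientChain : ∃ x y, IsQuotientChain a x y ∧ y 0 = 0 := by
  have hlim (n : ℕ) : ∃ l ∈ Set.Icc (1 : ℝ) (a n + 1),
      Tendsto (fun k : ℕ => finiteQuotient a (k - n) n) (hyperfilter ℕ) (𝓝 l) :=
    isCompact_Icc.ultrafilter_le_nhds ((hyperfilter ℕ).map fun k => finiteQuotient a (k - n) n)
      (tendsto_principal.2 (.of_forall fun k => finiteQuotient_mem_Icc ha (k - n) n))
  choose x hx hxlim using hlim
  have hpos (n : ℕ) : 0 < x n := zero_lt_one.trans_le (hx n).1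
  refine ⟨x, _, isQuotientChain_backwardQuotient ha hpos fun n => ?_, rfl⟩
  refine tendsto_nhds_unique (hxlim n)
    ((((hxlim (n + 1)).inv₀ (hpos _).ne').const_add (a n : ℝ)).congr' ?_)
  filter_upwards [Nat.hyperfilter_le_atTop (eventually_gt_atTop n)] with k hk
  rw [show k - n = k - (n + 1) + 1 by omega, finiteQuotient]

end Existence

namespace IsQuotientChain

variable {a : ℕ → ℤ} {x y : ℕ → ℝ} (h : IsQuotientChain a x y)
include h

theorem mem_lagrangeSpectrum {t : ℝ} {φ : ℕ → ℕ} (hy : y 0 = 0)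
    (hlt : ∀ T > t, ∀ᶠ n in atTop, x n + y n < T) (hφ : Tendsto φ atTop atTop)
    (hlim : Tendsto (fun k => x (φ k) + y (φ k)) atTop (𝓝 t)) : t ∈ LagrangeSpectrum :=
  mem_lagrangeSpectrum_iff.2 ⟨a, x, y, h, hy, hlt, .of_comp hφ hlim.mapClusterPt⟩

theorem succ_le_one (n : ℕ) : y (n + 1) ≤ 1 := by
  have : (1 : ℝ) ≤ a n := by exact_mod_cast h.one_le_digit n
  rw [h.succ_eq]
  exact inv_le_one_of_one_le₀ (le_add_of_le_of_nonneg this (h.nonneg n))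

end IsQuotientChain

theorem sqrt_sq_add_four_mem_lagrangeSpectrum {n : ℤ} (hn : 1 ≤ n) :
    √((n : ℝ) ^ 2 + 4) ∈ LagrangeSpectrum := by
  have hn' : (1 : ℝ) ≤ n := by exact_mod_cast hn
  obtain ⟨x, hx⟩ : ∃ x, x = (n + √((n : ℝ) ^ 2 + 4)) / 2 := ⟨_, rfl⟩
  have hx₀ : 0 < x := by rw [hx]; positivity
  have hfix : x = n + x⁻¹ := by
    have hsq : √((n : ℝ) ^ 2 + 4) ^ 2 = n ^ 2 + 4 := Real.sq_sqrt (by positivity)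
    refine sub_eq_iff_eq_add'.1 (eq_inv_of_mul_eq_one_left ?_)
    rw [hx]
    linarith
  have hx₁ : 1 < x := hfix ▸ lt_add_of_le_of_pos hn' (inv_pos.2 hx₀)
  have h : IsQuotientChain (fun _ => n) (fun _ => x) (backwardQuotient fun _ => n) :=
    isQuotientChain_backwardQuotient (fun _ => hn) (fun _ => hx₀) fun _ => hfix
  have hy : Tendsto (backwardQuotient fun _ => n) atTop (𝓝 x⁻¹) := by
    refine tendsto_of_abs_succ_sub_le (inv_nonneg.2 hx₀.le) (inv_lt_one_of_one_lt₀ hx₁) fun k => ?_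
    have := abs_inv_add_sub_le hn' (inv_nonneg.2 hx₀.le) (h.nonneg k)
    rwa [← hfix, ← h.succ_eq] at this
  have hlim := hy.const_add x
  rw [show x + x⁻¹ = √((n : ℝ) ^ 2 + 4) by linarith] at hlim
  exact h.mem_lagrangeSpectrum rfl (fun T hT => hlim.eventually_lt_const hT) tendsto_id hlim

theorem sqrt_thirteen_mem_lagrangeSpectrum : √13 ∈ LagrangeSpectrum := by
  have := sqrt_sq_add_four_mem_lagrangeSpectrum (n := 3) (by norm_num)
  norm_num at this
  exact this

theorem sqrt_twelve_mem_lagrangeSpectrum : √12 ∈ LagrangeSpectrum := by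
  obtain ⟨hl, hu⟩ := sqrt_three_mem_Ioo
  let a (n : ℕ) : ℤ := if Even n then 1 else 2
  let x (n : ℕ) : ℝ := if Even n then (1 + √3) / 2 else 1 + √3
  have h : IsQuotientChain a x (backwardQuotient a) := by
    refine isQuotientChain_backwardQuotient (fun n => ?_) (fun n => ?_) fun n => ?_
    · simp only [a]
      split_ifs <;> norm_num
    · simp only [x]
      split_ifs <;> positivity
    · by_cases hn : Even n <;> simp [a, x, hn, Nat.even_add_one, one_add_sqrt_three_inv,
        div_eq_mul_inv] <;> ring
  have hy : Tendsto (fun k => backwardQuotient a (2 * k)) atTop (𝓝 ((√3 - 1) / 2)) := by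
    refine tendsto_of_abs_succ_sub_le (r := 1 / 2) (by norm_num) (by norm_num) fun k => ?_
    have := abs_two_one_sub_le (h.nonneg (2 * k))
    simpa [mul_add, backwardQuotient, a, Nat.even_add_one] using this
  have heven : Tendsto (fun k => x (2 * k) + backwardQuotient a (2 * k)) atTop (𝓝 √3) := by
    convert hy.const_add ((1 + √3) / 2) using 2
    · simp [x]
    · ring
  have hodd : Tendsto (fun k => x (2 * k + 1) + backwardQuotient a (2 * k + 1)) atTop
      (𝓝 √12) := by
    convert ((hy.const_add 1).inv₀ (by linarith)).const_add (1 + √3) using 2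
    · simp [x, backwardQuotient, a]
    · rw [one_add_half_sqrt_three_sub_one_inv, sqrt_twelve]
      ring
  have hhalf : Tendsto (fun n : ℕ => n / 2) atTop atTop :=
    tendsto_atTop_atTop.2 fun b => ⟨2 * b, fun n hn => by omega⟩
  refine h.mem_lagrangeSpectrum rfl (fun T hT => ?_)
    (tendsto_atTop_mono (fun k => by dsimp only [id]; omega) tendsto_id) hodd
  have hT' : √3 < T := by linarith [sqrt_twelve]
  filter_upwards [hhalf.eventually (heven.eventually_lt_const hT'),
    hhalf.eventually (hodd.eventually_lt_const hT)] with n hlt_even hlt_odd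
  rcases n.even_or_odd' with ⟨k, rfl | rfl⟩
  · rwa [Nat.mul_div_cancel_left k two_pos] at hlt_even
  · rwa [show (2 * k + 1) / 2 = k by omega] at hlt_odd

/-- Blocks of partial quotients `3, 3, 2, 1, 2, 1, …, 2` of lengths `1, 3, 5, …`, the block of
length `2 m + 1` starting at the index `m ^ 2`. -/
def perronDigit (n : ℕ) : ℤ :=
  let j := n - n.sqrt ^ 2
  if j ≤ 1 then 3 else if Even j then 2 else 1

section PerronDigit

theorem perronDigit_sq_add {m j : ℕ} (hj : j ≤ m + m) :
    perronDigit (m ^ 2 + j) = if j ≤ 1 then 3 else if Even j then 2 else 1 := by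
  rw [perronDigit, Nat.sqrt_add_eq' m hj, Nat.add_sub_cancel_left]

theorem perronDigit_sq_add_even {m i : ℕ} (hi : i < m) : perronDigit (m ^ 2 + 2 * i + 2) = 2 := by
  rw [add_assoc, perronDigit_sq_add (by omega), if_neg (by omega),
    if_pos ((even_two_mul i).add even_two)]

theorem perronDigit_sq_add_odd {m i : ℕ} (hi : i + 1 < m) :
    perronDigit (m ^ 2 + 2 * i + 3) = 1 := by
  rw [add_assoc, perronDigit_sq_add (by omega), if_neg (by omega),
    if_neg (Nat.not_even_iff_odd.2 ((even_two_mul i).add_odd (by decide)))]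

theorem perronDigit_mem_Icc (n : ℕ) : perronDigit n ∈ Set.Icc (1 : ℤ) 3 := by
  simp only [perronDigit]
  split_ifs <;> decide

theorem perronDigit_le_two_or (n : ℕ) :
    perronDigit n ≤ 2 ∨ n = n.sqrt ^ 2 ∨ n = n.sqrt ^ 2 + 1 := by
  have := Nat.sqrt_le' n
  simp only [perronDigit]
  split_ifs <;> omega

end PerronDigit

namespace IsQuotientChain

theorem add_le_of_digit_le {a : ℕ → ℤ} {x y : ℕ → ℝ} (h : IsQuotientChain a x y)
    (ha : ∀ n, a n ≤ 3) {n : ℕ} (hn : a (n + 3) ≤ 2) : x (n + 3) + y (n + 3) ≤ 3.6 := by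
  have hinv {b c : ℤ} {w : ℝ} (hb : 1 ≤ b) (hc : 1 ≤ c) (hc' : c ≤ 3) (hw : 0 ≤ w)
      (hw' : w ≤ 1) : (b + (c + w)⁻¹)⁻¹ ≤ 4 / 5 := by
    have hb' : (1 : ℝ) ≤ b := by exact_mod_cast hb
    have h0 : (1 : ℝ) ≤ c := by exact_mod_cast hc
    have h3 : (c : ℝ) ≤ 3 := by exact_mod_cast hc'
    have : (4 : ℝ)⁻¹ ≤ (c + w)⁻¹ := inv_anti₀ (by linarith) (by linarith)
    exact inv_le_of_inv_le₀ (by norm_num) (by linarith)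
  have hx := hinv (h.one_le_digit (n + 4)) (h.one_le_digit (n + 5)) (ha _)
    (inv_nonneg.2 (zero_le_one.trans (h.one_lt (n + 6)).le)) (inv_le_one_of_one_le₀ (h.one_lt _).le)
  have hy := hinv (h.one_le_digit (n + 2)) (h.one_le_digit (n + 1)) (ha _) (h.nonneg _)
    (h.succ_le_one n)
  rw [← h.eq_add, ← h.eq_add] at hx
  rw [← h.succ_eq, ← h.succ_eq] at hy
  have hn' : (a (n + 3) : ℝ) ≤ 2 := by exact_mod_cast hn
  rw [h.eq_add]
  linarith

variable {x y : ℕ → ℝ} (h : IsQuotientChain perronDigit x y)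
include h

theorem abs_backward_perronDigit_sub_le {m i : ℕ} (hi : i < m) :
    |y (m ^ 2 + 2 * i + 3) - (√3 - 1) / 2| ≤ (1 / 2) ^ i := by
  induction i with
  | zero =>
    obtain ⟨hl, hu⟩ := sqrt_three_mem_Ioo
    have := h.nonneg (m ^ 2 + 2 * 0 + 3)
    have := h.succ_le_one (m ^ 2 + 2 * 0 + 2)
    rw [pow_zero, abs_le]
    constructor <;> linarith
  | succ i ih =>
    have hstep := abs_two_one_sub_le (h.nonneg (m ^ 2 + 2 * i + 3))
    have heq : y (m ^ 2 + 2 * (i + 1) + 3) = (2 + (1 + y (m ^ 2 + 2 * i + 3))⁻¹)⁻¹ := by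
      rw [h.succ_eq, perronDigit_sq_add_even hi, show m ^ 2 + 2 * (i + 1) + 2 =
        m ^ 2 + 2 * i + 3 + 1 by ring, h.succ_eq, perronDigit_sq_add_odd hi]
      norm_num
    rw [heq, pow_succ' (1 / 2 : ℝ)]
    exact hstep.trans (mul_le_mul_of_nonneg_left (ih (by omega)) (by norm_num))

theorem abs_forward_perronDigit_sub_le {m i j : ℕ} (hij : i + j < m) :
    |(x (m ^ 2 + 2 * j + 2))⁻¹ - (√3 - 1) / 2| ≤ (1 / 2) ^ i := by
  have hpos (n : ℕ) : 0 < (x n)⁻¹ := inv_pos.2 (zero_lt_one.trans (h.one_lt n))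
  induction i generalizing j with
  | zero =>
    obtain ⟨hl, hu⟩ := sqrt_three_mem_Ioo
    have := hpos (m ^ 2 + 2 * j + 2)
    have := inv_le_one_of_one_le₀ (h.one_lt (m ^ 2 + 2 * j + 2)).le
    rw [pow_zero, abs_le]
    constructor <;> linarith
  | succ i ih =>
    have hstep := abs_two_one_sub_le (hpos (m ^ 2 + 2 * (j + 1) + 2)).le
    have heq : x (m ^ 2 + 2 * j + 2) = 2 + (1 + (x (m ^ 2 + 2 * (j + 1) + 2))⁻¹)⁻¹ := by
      rw [h.eq_add, perronDigit_sq_add_even (by omega), h.eq_add (m ^ 2 + 2 * j + 2 + 1),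
        perronDigit_sq_add_odd (by omega)]
      norm_num [mul_add, add_assoc]
    rw [heq, pow_succ' (1 / 2 : ℝ)]
    exact hstep.trans (mul_le_mul_of_nonneg_left (ih (by omega)) (by norm_num))

theorem tendsto_backward_perronDigit :
    Tendsto (fun m => y (m ^ 2)) atTop (𝓝 ((√3 - 1) / 2)) := by
  refine (tendsto_add_atTop_iff_nat 2).1 (tendsto_iff_norm_sub_tendsto_zero.2 (squeeze_zero
    (fun _ => norm_nonneg _) (fun m => ?_)
    (tendsto_pow_atTop_nhds_zero_of_lt_one (r := 1 / 2) (by norm_num) (by norm_num))))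
  have := h.abs_backward_perronDigit_sub_le m.lt_succ_self
  rwa [show (m + 1) ^ 2 + 2 * m + 3 = (m + 2) ^ 2 by ring] at this

theorem tendsto_forward_perronDigit :
    Tendsto (fun m => (x (m ^ 2 + 2))⁻¹) atTop (𝓝 ((√3 - 1) / 2)) :=
  (tendsto_add_atTop_iff_nat 1).1 (tendsto_iff_norm_sub_tendsto_zero.2 (squeeze_zero
    (fun _ => norm_nonneg _)
    (fun m => h.abs_forward_perronDigit_sub_le (j := 0) m.lt_succ_self)
    (tendsto_pow_atTop_nhds_zero_of_lt_one (r := 1 / 2) (by norm_num) (by norm_num))))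

theorem eventually_eq_three_add_perronDigit :
    ∀ᶠ m in atTop, x (m ^ 2) = 3 + (x (m ^ 2 + 1))⁻¹ ∧
      x (m ^ 2 + 1) = 3 + (x (m ^ 2 + 2))⁻¹ ∧ y (m ^ 2 + 1) = (3 + y (m ^ 2))⁻¹ := by
  filter_upwards [eventually_ge_atTop 1] with m hm
  have h₀ : perronDigit (m ^ 2) = 3 := by
    simpa using perronDigit_sq_add (m := m) (j := 0) (by omega)
  have h₁ : perronDigit (m ^ 2 + 1) = 3 := by
    simpa using perronDigit_sq_add (show 1 ≤ m + m by omega)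
  rw [h.eq_add (m ^ 2), h.eq_add (m ^ 2 + 1), h.succ_eq, h₀, h₁]
  norm_num

theorem tendsto_perronDigit :
    Tendsto (fun m => x (m ^ 2) + y (m ^ 2)) atTop (𝓝 ((65 + 9 * √3) / 22)) ∧
      Tendsto (fun m => x (m ^ 2 + 1) + y (m ^ 2 + 1)) atTop (𝓝 ((65 + 9 * √3) / 22)) := by
  have hne : 3 + (√3 - 1) / 2 ≠ 0 := by linarith [sqrt_three_mem_Ioo.1]
  have hx := h.tendsto_forward_perronDigit.const_add 3
  have hy := h.tendsto_backward_perronDigit.const_add 3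
  have heq := h.eventually_eq_three_add_perronDigit
  rw [perron_eq]
  constructor
  · refine (hy.add (hx.inv₀ hne)).congr' (heq.mono fun m ⟨h₀, h₁, _⟩ => ?_)
    beta_reduce
    rw [h₀, h₁]
    ring
  · exact (hx.add (hy.inv₀ hne)).congr' (heq.mono fun m ⟨_, h₁, h₂⟩ => by simp only [h₁, h₂])

end IsQuotientChain

theorem perron_mem_lagrangeSpectrum : (65 + 9 * √3) / 22 ∈ LagrangeSpectrum := by
  obtain ⟨x, y, h, hy⟩ := exists_isQuotientChain fun n => (perronDigit_mem_Icc n).1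
  obtain ⟨hlim₀, hlim₁⟩ := h.tendsto_perronDigit
  have hsqrt : Tendsto Nat.sqrt atTop atTop :=
    tendsto_atTop_atTop.2 fun b => ⟨b ^ 2, fun n hn => Nat.le_sqrt'.2 hn⟩
  refine h.mem_lagrangeSpectrum hy (fun T hT => ?_) (tendsto_pow_atTop two_ne_zero) hlim₀
  filter_upwards [hsqrt.eventually (hlim₀.eventually_lt_const hT),
    hsqrt.eventually (hlim₁.eventually_lt_const hT), eventually_ge_atTop 3] with n hn₀ hn₁ hn
  rcases perronDigit_le_two_or n with hle | heq | heq
  · obtain ⟨k, rfl⟩ := Nat.exists_eq_add_of_le' hn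
    have := h.add_le_of_digit_le (fun n => (perronDigit_mem_Icc n).2) hle
    linarith [sqrt_three_mem_Ioo.1]
  · rwa [← heq] at hn₀
  · rwa [← heq] at hn₁

theorem sqrt_thirteen_lt_perron : √13 < (65 + 9 * √3) / 22 := by
  rw [Real.sqrt_lt' (by positivity)]
  nlinarith [sqrt_three_mem_Ioo.1]

end

/-- **Perron**: `√12`, `√13` and `(65 + 9√3)/22` belong to the Lagrange spectrum, while
`M ∩ (√12, √13) = ∅` and `M ∩ (√13, (65 + 9√3)/22) = ∅`; in particular these two open
intervals are gaps of both spectra. -/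
theorem perron_gaps :
    Real.sqrt 12 ∈ LagrangeSpectrum ∧
    Real.sqrt 13 ∈ LagrangeSpectrum ∧
    (65 + 9 * Real.sqrt 3) / 22 ∈ LagrangeSpectrum ∧
    MarkovSpectrum ∩ Set.Ioo (Real.sqrt 12) (Real.sqrt 13) = ∅ ∧
    MarkovSpectrum ∩ Set.Ioo (Real.sqrt 13) ((65 + 9 * Real.sqrt 3) / 22) = ∅ ∧
    LagrangeSpectrum ∩ Set.Ioo (Real.sqrt 12) (Real.sqrt 13) = ∅ ∧
    LagrangeSpectrum ∩ Set.Ioo (Real.sqrt 13) ((65 + 9 * Real.sqrt 3) / 22) = ∅ := by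
  have gap₁ : MarkovSpectrum ∩ Set.Ioo √12 √13 = ∅ := by
    refine Set.eq_empty_of_forall_notMem fun t ⟨ht, hlt, hgt⟩ => ?_
    rcases le_sqrt_twelve_or_eq_sqrt_thirteen ht (hgt.trans sqrt_thirteen_lt_perron) with hle | rfl
    exacts [hle.not_gt hlt, hgt.false]
  have gap₂ : MarkovSpectrum ∩ Set.Ioo √13 ((65 + 9 * √3) / 22) = ∅ := by
    refine Set.eq_empty_of_forall_notMem fun t ⟨ht, hlt, hgt⟩ => ?_
    rcases le_sqrt_twelve_or_eq_sqrt_thirteen ht hgt with hle | rfl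
    · exact (hle.trans (Real.sqrt_le_sqrt (by norm_num))).not_gt hlt
    · exact hlt.false
  have hsub := lagrangeSpectrum_subset_markovSpectrum
  exact ⟨sqrt_twelve_mem_lagrangeSpectrum, sqrt_thirteen_mem_lagrangeSpectrum,
    perron_mem_lagrangeSpectrum, gap₁, gap₂,
    Set.subset_empty_iff.1 (gap₁ ▸ Set.inter_subset_inter_left _ hsub),
    Set.subset_empty_iff.1 (gap₂ ▸ Set.inter_subset_inter_left _ hsub)⟩
end
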